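/- Let g be a seven-dimensional real Lie algebra with a six-dimensional abelian ideal u, let e₇ ∈ g∖u, let V₂ and V₄ be subspaces of u of dimensions 2 and 4 with u = V₂ ⊕ V₄, and let ω ∈ Λ²V₄* be a nondegenerate two-form on V₄. Then g admits a cocalibrated G₂*-structure — i.e. there exists a closed four-form Ψ ∈ Λ⁴g* such that for some basis f¹,…,f⁷ of g*, Ψ = f^{1234}−f^{1256}−f^{3456}−f^{2467}+f^{2357}+f^{1457}+f^{1367} — if and only if ad(e₇)|_u ∈ End(u) is similar under GL(u) to an element of the set S := {f ∈ End(u) : f(V₄) ⊆ V₄ and pr_{V₄}∘f|_{V₄} = −(tr(f₂)/2)·id_{V₄} + f₄ for some f₄ ∈ sp(V₄,ω), where f₂ := pr_{V₂}∘f|_{V₂}}. -/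

import Mathlib

open Module

section AltMachinery

variable {F : Type*} [Field F] {V : Type*} [AddCommGroup V] [Module F V]

/-- The wedge `φ₁ ∧ … ∧ φ_m` of `m` covectors, as an alternating `m`-form on `V`:
`(φ₁ ∧ … ∧ φ_m)(v₁,…,v_m) = det (φ_i (v_j))`. -/
noncomputable def wedgeCov (m : ℕ) (φ : Fin m → Module.Dual F V) :
    V [⋀^Fin m]→ₗ[F] F :=
  (Matrix.detRowAlternating : (Fin m → F) [⋀^Fin m]→ₗ[F] F).compLinearMap
    (LinearMap.pi φ)

/-- A decomposable alternating `m`-form: a wedge of `m` covectors. -/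
def AltDec (m : ℕ) (X : V [⋀^Fin m]→ₗ[F] F) : Prop :=
  ∃ φ : Fin m → Module.Dual F V, X = wedgeCov m φ

/-- The `m`-form `X` is a sum of `l` decomposable `m`-forms. -/
def AltLenLE (m l : ℕ) (X : V [⋀^Fin m]→ₗ[F] F) : Prop :=
  ∃ Y : Fin l → (V [⋀^Fin m]→ₗ[F] F), (∀ i, AltDec m (Y i)) ∧ X = ∑ i, Y i

/-- The `m`-form `X` has length `l`: it is a sum of `l` decomposable `m`-forms and of no
smaller number of them. -/
def AltHasLen (m l : ℕ) (X : V [⋀^Fin m]→ₗ[F] F) : Prop :=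
  AltLenLE m l X ∧ ∀ j < l, ¬ AltLenLE m j X

end AltMachinery

section CE

variable {F : Type*} [Field F] {g : Type*} [LieRing g] [LieAlgebra F g]

/-- The Chevalley–Eilenberg differential of a `(k+1)`-form (given as a function on tuples):
`(dρ)(x₀,…,x_{k+1}) = ∑_{i<j} (-1)^{i+j} ρ(⁅x_i,x_j⁆, x₀,…,x̂_i,…,x̂_j,…,x_{k+1})`. -/
noncomputable def ceDiff (k : ℕ) (ρ : (Fin (k + 1) → g) → F) : (Fin (k + 2) → g) → F :=
  fun x => ∑ i : Fin (k + 2), ∑ j : Fin (k + 2),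
    if h : (i : ℕ) < (j : ℕ) then
      (-1 : F) ^ ((i : ℕ) + (j : ℕ)) *
        ρ (Fin.cons ⁅x i, x j⁆ fun l : Fin k =>
            x (j.succAbove ((⟨(i : ℕ),
              Nat.lt_of_lt_of_le h (Nat.lt_succ_iff.mp j.isLt)⟩ : Fin (k + 1)).succAbove l)))
    else 0

end CE

section G2Forms

variable {F : Type*} [Field F] {g : Type*} [AddCommGroup g] [Module F g]

/-- The wedge `f^i ∧ f^j ∧ f^k ∧ f^l` of four covectors from the basis `b` of `g*`. -/
noncomputable def bw (b : Basis (Fin 7) F (Module.Dual F g)) (i j k l : Fin 7) :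
    g [⋀^Fin 4]→ₗ[F] F :=
  wedgeCov 4 ![b i, b j, b k, b l]

/-- The four-form `f^{1234}+f^{1256}+f^{3456}-f^{2467}+f^{2357}+f^{1457}+f^{1367}` (the
Hodge dual of a `G₂`- resp. `(G₂)_ℂ`-structure), written with `0`-based indices. -/
noncomputable def stdG2 (b : Basis (Fin 7) F (Module.Dual F g)) : g [⋀^Fin 4]→ₗ[F] F :=
  bw b 0 1 2 3 + bw b 0 1 4 5 + bw b 2 3 4 5 - bw b 1 3 5 6 +
    bw b 1 2 4 6 + bw b 0 3 4 6 + bw b 0 2 5 6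

/-- The four-form `f^{1234}-f^{1256}-f^{3456}-f^{2467}+f^{2357}+f^{1457}+f^{1367}` (the
Hodge dual of a `G₂*`-structure), written with `0`-based indices. -/
noncomputable def stdG2star (b : Basis (Fin 7) F (Module.Dual F g)) :
    g [⋀^Fin 4]→ₗ[F] F :=
  bw b 0 1 2 3 - bw b 0 1 4 5 - bw b 2 3 4 5 - bw b 1 3 5 6 +
    bw b 1 2 4 6 + bw b 0 3 4 6 + bw b 0 2 5 6

/-- Membership in `Λ⁴W ⊆ Λ⁴g*` for a subspace `W ⊆ g*`: the span of the wedges of four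
covectors from `W`. -/
def mem4Pow (W : Submodule F (Module.Dual F g)) (Ω : g [⋀^Fin 4]→ₗ[F] F) : Prop :=
  Ω ∈ Submodule.span F
    {Y : g [⋀^Fin 4]→ₗ[F] F |
      ∃ φ : Fin 4 → Module.Dual F g, (∀ i, φ i ∈ W) ∧ Y = wedgeCov 4 φ}

end G2Forms

/-!
Let `α ∈ g*` have kernel `u` and `α e₇ = 1`, and write `A = ad(e₇)|_u`. As `u` is abelian,
`dΨ = 0` says that the derivation action of `A` kills `Ψ|_u`.

If `Ψ = stdG2star b`, its Hodge dual is a trivector on `g`. Contracting it with `α` gives an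
alternating form `β` on `g*` of rank at least four, and `dΨ = 0` says that `β` is scaled by `tr A`
under the dual action of `ad(e₇)`. Hence the image `W ⊆ u` of `β` is an `A`-invariant symplectic
space of dimension four or six on which `A` is conformally symplectic with factor `tr A`.

If `W = u`, then `2 tr A = 6 tr A`, so `A ∈ sp(u, σ)`, and there is still an invariant
four-dimensional space on which `A` preserves some symplectic form. If `A` preserves a plane on
which `σ` is nondegenerate, the complement `σ`-orthogonal to it will do. Otherwise `σ` vanishes on
`ker A`, and `σ x (A x) = 0` on the eigenspaces of `A²`. The `σ`-selfadjoint operator `A²` has an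
invariant Lagrangian, of dimension three, so it has a real eigenvalue `μ`. The range of `A² - μ`
carries an `A`-invariant symplectic form, so the eigenspace `E` has even dimension. Dimension six
is excluded because `ker A` is isotropic; for dimension two the range of `A² - μ` will do; and
dimension four forces `μ = 0` and `A E = ker A ⊆ E = ker A²`, so that `E` itself carries an
invariant symplectic form.

Conversely, let `τ` be a symplectic form on a four-dimensional `W` with factor `tr A`. The
contraction of a volume form of `u` with the bivector `τ⁻¹` is killed by `A`; it has the form
`(w⁰¹ + w²³) ∧ w⁴⁵`, and so is the restriction to `u` of a form `stdG2star b`.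

Finally, `f ∈ S` means that `V₄` is `f`-invariant and `ω` is scaled by `-tr f₂`; as then
`tr f = tr f₂ + 2 (-tr f₂)`, this factor is `tr f`. All symplectic forms of the same rank are
equivalent, so `A` is similar to an element of `S` if and only if such a `W` exists.
-/

open Function (update)

section FormDeriv

variable {R M N ι : Type*} [CommRing R] [AddCommGroup M] [Module R M] [AddCommGroup N] [Module R N]
  [DecidableEq ι]

theorem compLinearMap_update_id_apply (f : M →ₗ[R] M) (Ω : MultilinearMap R (fun _ : ι => M) N)
    (i : ι) (v : ι → M) :
    Ω.compLinearMap (update (fun _ => LinearMap.id) i f) v = Ω (update v i (f (v i))) := by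
  rw [MultilinearMap.compLinearMap_apply]
  congr 1
  ext j
  rcases eq_or_ne j i with rfl | hj <;> simp [*]

variable [Fintype ι]

/-- The derivation action of an endomorphism `f` on alternating forms,
`(v₁, …, vₙ) ↦ ∑ i, Ω (v₁, …, f vᵢ, …, vₙ)`. The sign is the opposite of the one making this a
representation of `gl(M)`; it is chosen so that `f` acts on top-degree forms as `trace f`. -/
def formDeriv (f : M →ₗ[R] M) : (M [⋀^ι]→ₗ[R] N) →ₗ[R] (M [⋀^ι]→ₗ[R] N) where
  toFun Ω :=
    { (∑ i, Ω.toMultilinearMap.compLinearMap (update (fun _ => LinearMap.id) i f)) with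
      map_eq_zero_of_eq' := fun v i j hv hij => by
        have hswap : update v j (f (v j)) = update v i (f (v i)) ∘ Equiv.swap i j := by
          ext l
          rcases eq_or_ne l i with rfl | hi
          · simp [hij, hij.symm, hv]
          rcases eq_or_ne l j with rfl | hj
          · simp [hv]
          · simp [hi, hj, Equiv.swap_apply_of_ne_of_ne hi hj]
        simp only [MultilinearMap.toFun_eq_coe, sum_apply, compLinearMap_update_id_apply,
          AlternatingMap.coe_multilinearMap]
        rw [Fintype.sum_eq_add i j hij, hswap, Ω.map_swap _ hij, add_neg_cancel]
        rintro k ⟨hki, hkj⟩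
        exact Ω.map_eq_zero_of_eq _ (by simp [hki.symm, hkj.symm, hv]) hij }
  map_add' Ω Ω' := by ext v; simp [Finset.sum_add_distrib]
  map_smul' c Ω := by ext v; simp [Finset.smul_sum]

theorem formDeriv_apply (f : M →ₗ[R] M) (Ω : M [⋀^ι]→ₗ[R] N) (v : ι → M) :
    formDeriv f Ω v = ∑ i, Ω (update v i (f (v i))) :=
  (sum_apply ..).trans
    (Finset.sum_congr rfl fun i _ => compLinearMap_update_id_apply f Ω.toMultilinearMap i v)

theorem formDeriv_eq_trace_smul (b : Basis ι R M) (f : M →ₗ[R] M) (Ω : M [⋀^ι]→ₗ[R] R) :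
    formDeriv f Ω = LinearMap.trace R M f • Ω := by
  have hterm (i : ι) : Ω (update b i (f (b i))) = b.repr (f (b i)) i * Ω b := by
    nth_rw 1 [← b.sum_repr (f (b i))]
    rw [AlternatingMap.map_update_sum, Finset.sum_eq_single i]
    · simp
    · intro j _ hj
      rw [Ω.map_update_smul, Ω.map_eq_zero_of_eq (i := i) (j := j) _ (by simp [hj]) hj.symm,
        smul_zero]
    · simp
  have hb : formDeriv f Ω b = LinearMap.trace R M f * Ω b := by
    rw [formDeriv_apply, LinearMap.trace_eq_matrix_trace R b, Matrix.trace, Finset.sum_mul]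
    exact Finset.sum_congr rfl fun i _ => by
      rw [hterm, Matrix.diag_apply, LinearMap.toMatrix_apply]
  rw [(formDeriv f Ω).eq_smul_basis_det b, hb, mul_smul, ← Ω.eq_smul_basis_det b]

end FormDeriv

section WedgeCov

theorem sum_det_updateRow_eq_sum_det_updateCol {R n : Type*} [CommRing R] [Fintype n]
    [DecidableEq n] (A B : Matrix n n R) :
    ∑ i, (A.updateRow i (B i)).det = ∑ j, (A.updateCol j (B.col j)).det := by
  have hcol (j : n) : (A.updateCol j (B.col j)).det = (A.adjugate * B).diag j := by
    rw [← Matrix.cramer_apply, Matrix.cramer_eq_adjugate_mulVec]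
    rfl
  have hrow (i : n) : (A.updateRow i (B i)).det = (B * A.adjugate).diag i := by
    rw [← Matrix.cramer_transpose_apply, Matrix.cramer_eq_adjugate_mulVec,
      ← Matrix.adjugate_transpose]
    simp only [Matrix.mulVec_transpose]
    rfl
  simp only [hcol, hrow]
  exact Matrix.trace_mul_comm B A.adjugate

variable {F V : Type*} [Field F] [AddCommGroup V] [Module F V]

theorem wedgeCov_apply {m : ℕ} (φ : Fin m → Dual F V) (v : Fin m → V) :
    wedgeCov m φ v = (Matrix.of fun i j => φ j (v i)).det := rfl

theorem formDeriv_wedgeCov_apply {m : ℕ} (f : V →ₗ[F] V) (φ : Fin m → Dual F V) (v : Fin m → V) :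
    formDeriv f (wedgeCov m φ) v = ∑ i, wedgeCov m (update φ i (φ i ∘ₗ f)) v := by
  rw [formDeriv_apply]
  convert sum_det_updateRow_eq_sum_det_updateCol (Matrix.of fun i j => φ j (v i))
    (Matrix.of fun i j => φ j (f (v i))) using 2 with i _ j
  · rw [wedgeCov_apply]
    congr 1
    ext k l
    rcases eq_or_ne k i with rfl | hk <;> simp [*]
  · rw [wedgeCov_apply]
    congr 1
    ext k l
    rcases eq_or_ne l j with rfl | hk <;> simp [*]

end WedgeCov

section CEDiff

theorem sum_sum_eq_sum_sum_lt {A : Type*} [AddCommMonoid A] {n : ℕ}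
    (S : Fin (n + 1) → Fin n → A) :
    ∑ i, ∑ l, S i l = ∑ i : Fin (n + 1), ∑ j : Fin (n + 1), if h : (i : ℕ) < j then
      S i ⟨j - 1, by lia⟩ + S j ⟨i, by lia⟩ else 0 := by
  let L (i j : Fin (n + 1)) : A := if h : (i : ℕ) < j then S i ⟨j - 1, by lia⟩ else 0
  let G (i j : Fin (n + 1)) : A := if h : (j : ℕ) < i then S i ⟨j, by lia⟩ else 0
  have hrow (i : Fin (n + 1)) : ∑ l, S i l = ∑ j, (L i j + G i j) := by
    rw [Fin.sum_univ_succAbove _ i]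
    simp only [L, G, lt_irrefl, dite_false, add_zero, zero_add]
    refine Finset.sum_congr rfl fun l _ => ?_
    rcases Fin.castSucc_lt_or_lt_succ i l with hl | hl
    · rw [Fin.succAbove_of_castSucc_lt _ _ hl, dif_neg (Fin.lt_def.1 hl).le.not_gt,
        dif_pos (Fin.lt_def.1 hl), zero_add]
      rfl
    · rw [Fin.succAbove_of_lt_succ _ _ hl, dif_neg (Fin.lt_def.1 hl).le.not_gt,
        dif_pos (Fin.lt_def.1 hl), add_zero]
      rfl
  calc ∑ i, ∑ l, S i l = ∑ i, ∑ j, (L i j + G j i) := by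
        simp only [hrow, Finset.sum_add_distrib]
        rw [Finset.sum_comm (f := G)]
    _ = _ := by
        refine Finset.sum_congr rfl fun i _ => Finset.sum_congr rfl fun j _ => ?_
        by_cases h : (i : ℕ) < j
        · simp only [L, G, dif_pos h]
        · simp only [L, G, dif_neg h, add_zero]

theorem succAbove_succAbove_of_lt {k : ℕ} {i j : Fin (k + 2)} (h : (i : ℕ) < j)
    (hi : (i : ℕ) < k + 1) (hj : (j : ℕ) - 1 < k + 1) (m : Fin k) :
    i.succAbove (Fin.succAbove ⟨j - 1, hj⟩ m) = j.succAbove (Fin.succAbove ⟨i, hi⟩ m) := by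
  simp only [Fin.succAbove, Fin.lt_def, Fin.ext_iff]
  split_ifs <;> simp_all <;> lia

variable {F g : Type*} [Field F] [LieRing g] [LieAlgebra F g]

theorem ceDiff_eq_neg_alternatizeUncurryFin {k : ℕ} (α : Dual F g) (D : g →ₗ[F] g)
    (hbr : ∀ x y : g, ⁅x, y⁆ = α x • D y - α y • D x) (Ψ : g [⋀^Fin (k + 1)]→ₗ[F] F)
    (x : Fin (k + 2) → g) :
    ceDiff k Ψ x = -AlternatingMap.alternatizeUncurryFin (α.smulRight (formDeriv D Ψ)) x := by
  have hterm (v : Fin (k + 1) → g) (l : Fin (k + 1)) (z : g) :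
      Ψ (update v l z) = (-1) ^ (l : ℕ) * Ψ (Fin.cons z fun m => v (l.succAbove m)) := by
    rw [← Fin.insertNth_removeNth, AlternatingMap.map_insertNth, zsmul_eq_mul, Int.cast_pow,
      Int.cast_neg, Int.cast_one]
    rfl
  have hcons (a b : F) (y z : g) (r : Fin k → g) : Ψ (Fin.cons (a • y - b • z) r) =
      a * Ψ (Fin.cons y r) - b * Ψ (Fin.cons z r) := by
    have := Ψ.map_update_sub (Fin.cons 0 r) 0 (a • y) (b • z)
    rw [Ψ.map_update_smul, Ψ.map_update_smul] at this
    simpa only [Fin.update_cons_zero, smul_eq_mul] using this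
  simp only [AlternatingMap.alternatizeUncurryFin_apply, LinearMap.smulRight_apply,
    AlternatingMap.smul_apply, formDeriv_apply, Finset.smul_sum]
  rw [sum_sum_eq_sum_sum_lt, ceDiff, ← Finset.sum_neg_distrib]
  refine Finset.sum_congr rfl fun i _ => ?_
  rw [← Finset.sum_neg_distrib]
  refine Finset.sum_congr rfl fun j _ => ?_
  by_cases h : (i : ℕ) < j
  · obtain ⟨l, hl⟩ : ∃ l, (j : ℕ) = l + 1 := ⟨j - 1, by lia⟩
    have hj : i.succAbove ⟨j - 1, by lia⟩ = j := by
      rw [Fin.succAbove_of_lt_succ _ _ (by simp [Fin.lt_def]; lia)]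
      exact Fin.ext (by simp [hl])
    have hi : j.succAbove ⟨i, by lia⟩ = i := Fin.succAbove_of_castSucc_lt _ _ h
    simp only [dif_pos h, hterm, hbr, Fin.removeNth_apply, hi, hj, hcons,
      succAbove_succAbove_of_lt h (show (i : ℕ) < k + 1 by lia), zsmul_eq_mul, smul_eq_mul]
    simp only [hl, pow_add, Nat.add_sub_cancel]
    push_cast
    ring
  · simp only [dif_neg h, neg_zero]

theorem eq_zero_of_forall_ne_mem_ker {ι V : Type*} [AddCommGroup V] [Module F V] [Finite ι]
    [Nonempty ι] (α : Dual F V) (H : V [⋀^ι]→ₗ[F] F)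
    (hH : ∀ (x : ι → V) (i : ι), (∀ j ≠ i, α (x j) = 0) → H x = 0) : H = 0 := by
  classical
  cases nonempty_fintype ι
  ext x
  rw [AlternatingMap.zero_apply]
  by_cases hx : ∃ i, α (x i) ≠ 0
  · obtain ⟨i, hi⟩ := hx
    let c (j : ι) : F := α (x j) / α (x i)
    have key (s : Finset ι) (hs : i ∉ s) :
        H (fun j => if j ∈ s then x j - c j • x i else x j) = H x := by
      induction s using Finset.induction_on with
      | empty => simp
      | insert a s ha ih =>
        rw [Finset.mem_insert, not_or] at hs
        rw [← ih hs.2]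
        set y : ι → V := fun j => if j ∈ s then x j - c j • x i else x j
        have hy : (fun j => if j ∈ insert a s then x j - c j • x i else x j) =
            update y a (y a - c a • y i) := by
          ext j
          rcases eq_or_ne j a with rfl | hj <;> simp [y, *]
        rw [hy, H.map_update_sub, Function.update_eq_self, H.map_update_smul,
          H.map_update_self _ (Ne.symm hs.1), smul_zero, sub_zero]
    rw [← key (Finset.univ.erase i) (by simp)]
    exact hH _ i fun j hj => by simp [hj, c, hi]
  · push Not at hx
    exact hH x (Classical.arbitrary ι) fun j _ => hx j

theorem ceDiff_eq_zero_iff {k : ℕ} (α : Dual F g) {e : g} (he : α e = 1) (D : g →ₗ[F] g)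
    (hbr : ∀ x y : g, ⁅x, y⁆ = α x • D y - α y • D x) (Ψ : g [⋀^Fin (k + 1)]→ₗ[F] F) :
    ceDiff k Ψ = 0 ↔
      ∀ v : Fin (k + 1) → g, (∀ i, α (v i) = 0) → formDeriv D Ψ v = 0 := by
  set H := AlternatingMap.alternatizeUncurryFin (α.smulRight (formDeriv D Ψ)) with hH
  have hceDiff : ceDiff k Ψ = -H := funext (ceDiff_eq_neg_alternatizeUncurryFin α D hbr Ψ)
  have hsingle (x : Fin (k + 2) → g) (i : Fin (k + 2)) (hx : ∀ j ≠ i, α (x j) = 0) :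
      H x = (-1) ^ (i : ℕ) • α (x i) • formDeriv D Ψ (i.removeNth x) := by
    rw [hH, AlternatingMap.alternatizeUncurryFin_apply, Finset.sum_eq_single i]
    · rfl
    · intro j _ hj
      simp [hx j hj]
    · simp
  rw [hceDiff, neg_eq_zero]
  constructor
  · intro h v hv
    have := hsingle (Fin.cons e v) 0 fun j hj => by
      obtain ⟨l, rfl⟩ := Fin.exists_succ_eq.2 hj
      exact hv l
    simpa [h, he] using this.symm
  · intro h
    have hH0 : H = 0 := eq_zero_of_forall_ne_mem_ker α H fun x i hx => by
      rw [hsingle x i hx, h (i.removeNth x) fun j => hx _ (Fin.succAbove_ne i j), smul_zero,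
        smul_zero]
    rw [hH0]
    rfl

section AlmostAbelian

variable (u : LieIdeal F g) {e : g}

theorem exists_dual_apply_eq_one_and_ker_eq [FiniteDimensional F g]
    (hu : finrank F g = finrank F u + 1) (he : e ∉ u) :
    ∃ α : Dual F g, α e = 1 ∧ LinearMap.ker α = u.toSubmodule := by
  obtain ⟨α, hαe, hle⟩ := Submodule.exists_le_ker_of_notMem (p := u.toSubmodule) he
  have hker : u.toSubmodule = LinearMap.ker α := by
    refine Submodule.eq_of_le_of_finrank_eq hle ?_
    have := Dual.finrank_ker_add_one_of_ne_zero (f := α) (by rintro rfl; exact hαe rfl)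
    exact Nat.add_right_cancel (this.trans hu).symm
  exact ⟨(α e)⁻¹ • α, inv_mul_cancel₀ hαe,
    (LinearMap.ker_smul α _ (inv_ne_zero hαe)).trans hker.symm⟩

theorem lie_eq_of_ker_eq (habel : ∀ x ∈ u, ∀ y ∈ u, ⁅x, y⁆ = (0 : g)) {α : Dual F g}
    (hα : α e = 1) (hker : LinearMap.ker α = u.toSubmodule) (x y : g) :
    ⁅x, y⁆ = α x • LieAlgebra.ad F g e y - α y • LieAlgebra.ad F g e x := by
  have hmem (z : g) : z - α z • e ∈ u := by
    rw [← LieSubmodule.mem_toSubmodule, ← hker]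
    simp [hα]
  have := habel _ (hmem x) _ (hmem y)
  simp only [sub_lie, lie_sub, smul_lie, lie_smul, lie_self, smul_zero, sub_zero] at this
  rw [LieAlgebra.ad_apply, LieAlgebra.ad_apply, ← lie_skew e x, ← sub_eq_zero, ← this]
  module

theorem comp_ad_eq_zero_of_ker_eq {α : Dual F g} (hα : α e = 1)
    (hker : LinearMap.ker α = u.toSubmodule) : α ∘ₗ LieAlgebra.ad F g e = 0 := by
  ext y
  have hmem : y - α y • e ∈ u := by
    rw [← LieSubmodule.mem_toSubmodule, ← hker]
    simp [hα]
  have hlie : ⁅e, y - α y • e⁆ = ⁅e, y⁆ := by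
    rw [lie_sub, lie_smul, lie_self, smul_zero, sub_zero]
  have hlie_mem : ⁅e, y⁆ ∈ LinearMap.ker α := hker ▸ hlie ▸ u.lie_mem hmem
  exact hlie_mem

end AlmostAbelian

end CEDiff

section HodgeDual

variable {F V : Type*} [Field F] [AddCommGroup V] [Module F V]

theorem exists_basis_sum_inl_eq [FiniteDimensional F V] {m k : ℕ} (hV : finrank F V = m + k)
    {S : Submodule F V} (bS : Basis (Fin m) F S) :
    ∃ b : Basis (Fin m ⊕ Fin k) F V, ∀ i, b (.inl i) = bS i := by
  obtain ⟨S', hS'⟩ := S.exists_isCompl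
  have hS'k : finrank F S' = k := by
    have := Submodule.finrank_add_eq_of_isCompl hS'
    rwa [finrank_eq_card_basis bS, Fintype.card_fin, hV, Nat.add_left_cancel_iff] at this
  exact ⟨(bS.prod (finBasisOfFinrankEq F S' hS'k)).map (S.prodEquivOfIsCompl S' hS'),
    fun i => by simp⟩

/-- The contraction of an alternating form by the first block of its arguments. -/
def contractInl {R M N ι κ : Type*} [CommRing R] [AddCommGroup M] [Module R M] [AddCommGroup N]
    [Module R N] (Ω : M [⋀^ι ⊕ κ]→ₗ[R] N) (φ : ι → M) : M [⋀^κ]→ₗ[R] N where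
  __ := Ω.toMultilinearMap.currySum φ
  map_eq_zero_of_eq' θ i j hθ hij :=
    Ω.map_eq_zero_of_eq (Sum.elim φ θ) (i := .inr i) (j := .inr j) hθ (Sum.inr_injective.ne hij)

theorem contractInl_apply {R M N ι κ : Type*} [CommRing R] [AddCommGroup M] [Module R M]
    [AddCommGroup N] [Module R N] (Ω : M [⋀^ι ⊕ κ]→ₗ[R] N) (φ : ι → M) (θ : κ → M) :
    contractInl Ω φ θ = Ω (Sum.elim φ θ) := rfl

theorem sum_contractInl_update_add_formDeriv {R M ι κ : Type*} [CommRing R] [AddCommGroup M]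
    [Module R M] [Fintype ι] [Fintype κ] [DecidableEq ι] [DecidableEq κ] (b : Basis (ι ⊕ κ) R M)
    (f : M →ₗ[R] M) (Ω : M [⋀^ι ⊕ κ]→ₗ[R] R) (φ : ι → M) (θ : κ → M) :
    ∑ i, contractInl Ω (update φ i (f (φ i))) θ + formDeriv f (contractInl Ω φ) θ =
      LinearMap.trace R M f * contractInl Ω φ θ := by
  simpa only [contractInl_apply, formDeriv_apply, Fintype.sum_sum_type, Sum.elim_inl, Sum.elim_inr,
    Sum.update_elim_inl, Sum.update_elim_inr, AlternatingMap.smul_apply, smul_eq_mul] using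
    congr($(formDeriv_eq_trace_smul b f Ω) (Sum.elim φ θ))

theorem exists_contractInl_eq_mul_wedgeCov [FiniteDimensional F V] {m k : ℕ}
    (hV : finrank F V = m + k) (Ω : Dual F V [⋀^Fin m ⊕ Fin k]→ₗ[F] F) (θ : Fin k → Dual F V) :
    ∃ (r : F) (x : Fin m → V), (∀ i j, θ j (x i) = 0) ∧
      ∀ φ : Fin m → Dual F V, contractInl Ω φ θ = r * wedgeCov m φ x := by
  have hK : m ≤ finrank F (LinearMap.ker (LinearMap.pi θ)) := by
    have h1 := (LinearMap.pi θ).finrank_range_add_finrank_ker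
    have h2 := (LinearMap.range (LinearMap.pi θ)).finrank_le
    rw [finrank_fin_fun] at h2
    lia
  obtain ⟨x, hx⟩ := exists_linearIndependent_of_le_finrank hK
  obtain ⟨b, hb⟩ :=
    exists_basis_sum_inl_eq hV (Basis.span (hx.map' _ (Submodule.ker_subtype _)))
  have hθ (i : Fin m) (j : Fin k) : θ j (b (.inl i)) = 0 := by
    rw [hb, Basis.span_apply]
    exact congrFun (x i).2 j
  refine ⟨Ω b.dualBasis * (Matrix.of fun i j => θ j (b (.inr i))).det, fun i => b (.inl i), hθ,
    fun φ => ?_⟩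
  have hdet : b.dualBasis.det (Sum.elim φ θ) = (Matrix.of fun i j => φ j (b (.inl i))).det *
      (Matrix.of fun i j => θ j (b (.inr i))).det := by
    rw [Basis.det_apply, ← Matrix.det_fromBlocks_zero₁₂ _ (Matrix.of fun i j => φ j (b (.inr i)))]
    congr 1
    ext (i | i) (j | j) <;> simp [Basis.toMatrix_apply, hθ]
  rw [contractInl_apply, Ω.eq_smul_basis_det b.dualBasis, AlternatingMap.smul_apply, hdet,
    ← Ω.eq_smul_basis_det b.dualBasis, wedgeCov_apply, smul_eq_mul]
  ring

theorem alternatingMap_sum_apply {R M N ι T : Type*} [CommRing R] [AddCommGroup M] [Module R M]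
    [AddCommGroup N] [Module R N] [Fintype T] (Ω : T → M [⋀^ι]→ₗ[R] N) (v : ι → M) :
    (∑ t, Ω t) v = ∑ t, Ω t v :=
  map_sum (AddMonoidHom.mk' (fun Ω : M [⋀^ι]→ₗ[R] N => Ω v) fun _ _ => rfl) Ω _

theorem formDeriv_sum_contractInl_eq_trace_mul [FiniteDimensional F V] {T : Type*} [Fintype T]
    {m k : ℕ} (hV : finrank F V = m + k) (Ω : Dual F V [⋀^Fin m ⊕ Fin k]→ₗ[F] F) (D : V →ₗ[F] V)
    (ε : T → F) (φ : T → Fin m → Dual F V) (θ : Fin k → Dual F V)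
    (hD : ∀ x : Fin m → V, (∀ i j, θ j (x i) = 0) →
      formDeriv D (∑ t, ε t • wedgeCov m (φ t)) x = 0) :
    formDeriv D.dualMap (∑ t, ε t • contractInl Ω (φ t)) θ =
      LinearMap.trace F V D * (∑ t, ε t • contractInl Ω (φ t)) θ := by
  have hdual : finrank F (Dual F V) = m + k := Subspace.dual_finrank_eq.trans hV
  have htrace : LinearMap.trace F (Dual F V) D.dualMap = LinearMap.trace F V D :=
    LinearMap.trace_transpose' D
  obtain ⟨r, x, hx, hr⟩ := exists_contractInl_eq_mul_wedgeCov hV Ω θ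
  have hzero : ∑ t, ε t * ∑ i, contractInl Ω (update (φ t) i (D.dualMap (φ t i))) θ = 0 := by
    have := hD x hx
    simp only [map_sum, map_smul, alternatingMap_sum_apply, AlternatingMap.smul_apply,
      formDeriv_wedgeCov_apply, smul_eq_mul] at this
    calc _ = r * ∑ t, ε t * ∑ i, wedgeCov m (update (φ t) i (φ t i ∘ₗ D)) x := by
          simp only [hr, Finset.mul_sum, mul_left_comm r]
          rfl
      _ = 0 := by rw [this, mul_zero]
  have hsum (t : T) := sum_contractInl_update_add_formDeriv
    ((finBasisOfFinrankEq F _ hdual).reindex finSumFinEquiv.symm) D.dualMap Ω (φ t) θ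
  simp only [map_sum, map_smul, alternatingMap_sum_apply, AlternatingMap.smul_apply, smul_eq_mul,
    Finset.mul_sum, mul_left_comm (LinearMap.trace F V D)]
  simp only [← htrace, ← hsum, mul_add, Finset.sum_add_distrib, hzero, zero_add]

end HodgeDual

section SymplecticForms

variable {F V : Type*} [Field F] [AddCommGroup V] [Module F V] {τ : LinearMap.BilinForm F V}

theorem restrict_span_pair_nondegenerate (halt : τ.IsAlt) {x y : V} (hxy : τ x y ≠ 0) :
    (τ.restrict (Submodule.span F {x, y})).Nondegenerate := by
  have halt' : (τ.restrict (Submodule.span F {x, y})).IsAlt := fun z => halt z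
  refine halt'.isRefl.nondegenerate_iff_separatingLeft.2 fun ⟨z, hz⟩ hz0 => ?_
  obtain ⟨s, t, rfl⟩ := Submodule.mem_span_pair.1 hz
  have hx : t * τ y x = 0 := by
    simpa [halt.self_eq_zero] using hz0 ⟨x, Submodule.mem_span_pair.2 ⟨1, 0, by simp⟩⟩
  have hy : s * τ x y = 0 := by
    simpa [halt.self_eq_zero] using hz0 ⟨y, Submodule.mem_span_pair.2 ⟨0, 1, by simp⟩⟩
  have hyx : τ y x ≠ 0 := fun h => hxy (halt.eq_iff.1 h)
  ext
  simp [(mul_eq_zero.1 hx).resolve_right hyx, (mul_eq_zero.1 hy).resolve_right hxy]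

theorem linearIndependent_pair_of_apply_ne_zero (halt : τ.IsAlt) {x y : V} (hxy : τ x y ≠ 0) :
    LinearIndependent F ![x, y] := by
  refine LinearIndependent.pair_iff.2 fun s t h => ?_
  have hs : s * τ x y = 0 := by simpa [halt.self_eq_zero] using congr(τ $h y)
  have ht : t * τ x y = 0 := by simpa [halt.self_eq_zero] using congr(τ x $h)
  exact ⟨(mul_eq_zero.1 hs).resolve_right hxy, (mul_eq_zero.1 ht).resolve_right hxy⟩

theorem linearIndependent_of_apply_eq_J {ι : Type*} [Finite ι] [DecidableEq ι] {v : ι ⊕ ι → V}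
    (hv : ∀ s t, τ (v s) (v t) = Matrix.J ι F s t) : LinearIndependent F v := by
  cases nonempty_fintype ι
  refine Fintype.linearIndependent_iff.2 fun c hc => congrFun ?_
  refine Matrix.eq_zero_of_vecMul_eq_zero (Matrix.isUnit_det_J ι F).ne_zero (funext fun t => ?_)
  simpa [hv, Matrix.vecMul, dotProduct] using congr(τ $hc (v t))

theorem exists_apply_eq_neg_one [Nontrivial V] (hτ : τ.Nondegenerate) : ∃ x y, τ x y = -1 := by
  obtain ⟨x, hx⟩ := exists_ne (0 : V)
  obtain ⟨z, hz⟩ : ∃ z, τ x z ≠ 0 := by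
    by_contra! hcon
    exact hx (hτ.1 x hcon)
  exact ⟨x, -(τ x z)⁻¹ • z, by simp [hz]⟩

variable [FiniteDimensional F V]

theorem finrank_orthogonal_span_pair (halt : τ.IsAlt) (hτ : τ.Nondegenerate) {x y : V}
    (hxy : τ x y ≠ 0) :
    finrank F (τ.orthogonal (Submodule.span F {x, y})) + 2 = finrank F V := by
  have hspan : finrank F (Submodule.span F {x, y}) = 2 := by
    have := finrank_span_eq_card (linearIndependent_pair_of_apply_ne_zero halt hxy)
    rwa [Matrix.range_cons_cons_empty, Fintype.card_fin] at this
  have := (Submodule.span F {x, y}).finrank_le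
  rw [LinearMap.BilinForm.finrank_orthogonal hτ]
  lia

theorem restrict_orthogonal_nondegenerate (halt : τ.IsAlt) (hτ : τ.Nondegenerate)
    {S : Submodule F V} (hS : (τ.restrict S).Nondegenerate) :
    (τ.restrict (τ.orthogonal S)).Nondegenerate := by
  rw [LinearMap.BilinForm.restrict_nondegenerate_iff_isCompl_orthogonal halt.isRefl] at hS ⊢
  rw [LinearMap.BilinForm.orthogonal_orthogonal hτ halt.isRefl]
  exact hS.symm

theorem exists_symplectic_basis (halt : τ.IsAlt) (hτ : τ.Nondegenerate) :
    ∃ (n : ℕ) (b : Basis (Fin n ⊕ Fin n) F V),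
      ∀ s t, τ (b s) (b t) = Matrix.J (Fin n) F s t := by
  induction h : finrank F V using Nat.strong_induction_on generalizing V with
  | _ d ih =>
  by_cases htriv : Subsingleton V
  · exact ⟨0, Basis.empty V, fun s => isEmptyElim s⟩
  have := not_subsingleton_iff_nontrivial.1 htriv
  obtain ⟨x, y, hxy⟩ := exists_apply_eq_neg_one hτ
  have hyx : τ y x = 1 := by rw [← halt.neg_eq, hxy, neg_neg]
  have hxy0 : τ x y ≠ 0 := by simp [hxy]
  have hfinrank := finrank_orthogonal_span_pair halt hτ hxy0
  obtain ⟨n, b, hb⟩ := ih (finrank F (τ.orthogonal (Submodule.span F {x, y})))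
    (by lia) (V := τ.orthogonal (Submodule.span F {x, y})) (τ := τ.restrict _) (fun z => halt z)
    (restrict_orthogonal_nondegenerate halt hτ (restrict_span_pair_nondegenerate halt hxy0)) rfl
  have hperp (t : Fin n ⊕ Fin n) : τ x (b t) = 0 ∧ τ y (b t) = 0 :=
    ⟨(b t).2 x (Submodule.mem_span_of_mem (by simp)),
      (b t).2 y (Submodule.mem_span_of_mem (by simp))⟩
  let v : Fin (n + 1) ⊕ Fin (n + 1) → V :=
    Sum.elim (Fin.cons x fun i => b (.inl i)) (Fin.cons y fun i => b (.inr i))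
  have hv (s t) : τ (v s) (v t) = Matrix.J (Fin (n + 1)) F s t := by
    have hb' (s t) : τ (b s) (b t) = Matrix.J (Fin n) F s t := hb s t
    have hperp' (t : Fin n ⊕ Fin n) : τ (b t) x = 0 ∧ τ (b t) y = 0 :=
      (hperp t).imp halt.eq_iff.1 halt.eq_iff.1
    rcases s with s | s <;> rcases t with t | t <;> cases s using Fin.cases <;>
      cases t using Fin.cases <;>
      simp [v, Matrix.J, Matrix.one_apply, hxy, hyx, hperp, hperp', hb', halt.self_eq_zero,
        Fin.succ_ne_zero, (Fin.succ_ne_zero _).symm]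
  have hcard : Fintype.card (Fin (n + 1) ⊕ Fin (n + 1)) = finrank F V := by
    have := finrank_eq_card_basis b
    simp only [Fintype.card_sum, Fintype.card_fin] at this ⊢
    lia
  refine ⟨n + 1,
    basisOfLinearIndependentOfCardEqFinrank (linearIndependent_of_apply_eq_J hv) hcard, ?_⟩
  rwa [coe_basisOfLinearIndependentOfCardEqFinrank]

end SymplecticForms

section ConformalSymplectic

variable {F V : Type*} [Field F] [AddCommGroup V] [Module F V]

/-- `N` scales some symplectic form infinitesimally by `c`, that is, `N` lies in a conformal
symplectic Lie algebra `csp(V, τ)`; for `c = 0` this is `sp(V, τ)`. The form is not fixed, so that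
the notion transfers to subspaces and images. -/
def IsConfSymplectic (N : V →ₗ[F] V) (c : F) : Prop :=
  ∃ τ : LinearMap.BilinForm F V, τ.IsAlt ∧ τ.Nondegenerate ∧
    ∀ x y, τ (N x) y + τ x (N y) = c * τ x y

/-- `W` is an `A`-invariant subspace on which `A` is conformally symplectic with factor `c`. -/
def IsConfSymplecticOn (A : V →ₗ[F] V) (c : F) (W : Submodule F V) : Prop :=
  ∃ hW : ∀ x ∈ W, A x ∈ W, IsConfSymplectic (A.restrict hW) c

theorem IsConfSymplectic.conj {V' : Type*} [AddCommGroup V'] [Module F V'] {N : V →ₗ[F] V} {c : F}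
    (hN : IsConfSymplectic N c) (e : V ≃ₗ[F] V') : IsConfSymplectic (e.conj N) c := by
  obtain ⟨τ, halt, hτ, hN⟩ := hN
  exact ⟨LinearMap.BilinForm.congr e τ, fun x => halt _, hτ.congr e, fun x y => by
    simpa [LinearEquiv.conj_apply_apply] using hN (e.symm x) (e.symm y)⟩

theorem isConfSymplecticOn_of_restrict_nondegenerate {τ : LinearMap.BilinForm F V} (halt : τ.IsAlt)
    {A : V →ₗ[F] V} {c : F} (hA : ∀ x y, τ (A x) y + τ x (A y) = c * τ x y) {W : Submodule F V}
    (hW : ∀ x ∈ W, A x ∈ W) (hτ : (τ.restrict W).Nondegenerate) : IsConfSymplecticOn A c W :=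
  ⟨hW, τ.restrict W, fun x => halt x, hτ, fun x y => hA x y⟩

theorem apply_mem_orthogonal {τ : LinearMap.BilinForm F V}
    {A : V →ₗ[F] V} {c : F} (hA : ∀ x y, τ (A x) y + τ x (A y) = c * τ x y) {S : Submodule F V}
    (hS : ∀ x ∈ S, A x ∈ S) : ∀ x ∈ τ.orthogonal S, A x ∈ τ.orthogonal S := by
  intro x hx y hy
  have hyx : τ y x = 0 := hx y hy
  have hAyx : τ (A y) x = 0 := hx _ (hS y hy)
  simpa [hyx, hAyx] using hA y x

theorem exists_isAlt_range_apply_eq {X : Type*} [AddCommGroup X] [Module F X] {P : X →ₗ[F] V}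
    {β : LinearMap.BilinForm F X} (halt : β.IsAlt) (hker : LinearMap.ker P ≤ LinearMap.ker β) :
    ∃ τ : LinearMap.BilinForm F (LinearMap.range P), τ.IsAlt ∧
      ∀ x y, τ (P.rangeRestrict x) (P.rangeRestrict y) = β x y := by
  obtain ⟨s, hs⟩ := P.rangeRestrict.exists_rightInverse_of_surjective P.range_rangeRestrict
  have hβ (x : X) : β (s (P.rangeRestrict x)) = β x := by
    rw [← sub_eq_zero, ← map_sub]
    exact hker (by simpa [sub_eq_zero] using congr((($hs (P.rangeRestrict x) : _) : V)))
  refine ⟨β.compl₁₂ s s, fun x => halt (s x), fun x y => ?_⟩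
  rw [LinearMap.compl₁₂_apply, hβ, ← halt.neg_eq, hβ, halt.neg_eq]

theorem isConfSymplecticOn_range {X : Type*} [AddCommGroup X] [Module F X] {A : V →ₗ[F] V} {c : F}
    {P : X →ₗ[F] V} {A' : X →ₗ[F] X} {β : LinearMap.BilinForm F X} (hA : A ∘ₗ P = P ∘ₗ A')
    (halt : β.IsAlt) (hker : LinearMap.ker P = LinearMap.ker β)
    (hβ : ∀ x y, β (A' x) y + β x (A' y) = c * β x y) :
    IsConfSymplecticOn A c (LinearMap.range P) := by
  obtain ⟨τ, hτalt, hτ⟩ := exists_isAlt_range_apply_eq halt hker.le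
  have hrange : ∀ v ∈ LinearMap.range P, A v ∈ LinearMap.range P := by
    rintro _ ⟨x, rfl⟩
    exact ⟨A' x, congr($hA x).symm⟩
  have hrestrict (x : X) : A.restrict hrange (P.rangeRestrict x) = P.rangeRestrict (A' x) :=
    Subtype.ext congr($hA x)
  refine ⟨hrange, τ, hτalt, hτalt.isRefl.nondegenerate_iff_separatingLeft.2 ?_, ?_⟩
  · intro v hv
    obtain ⟨x, rfl⟩ := P.surjective_rangeRestrict v
    have hx : x ∈ LinearMap.ker P := by
      rw [hker]
      exact LinearMap.ext fun y => (hτ x y).symm.trans (hv _)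
    exact Subtype.ext hx
  · intro v w
    obtain ⟨x, rfl⟩ := P.surjective_rangeRestrict v
    obtain ⟨y, rfl⟩ := P.surjective_rangeRestrict w
    rw [hrestrict, hrestrict, hτ, hτ, hτ, hβ]

section FiniteDimensional

variable [FiniteDimensional F V]

theorem IsConfSymplectic.even_finrank {N : V →ₗ[F] V} {c : F} (hN : IsConfSymplectic N c) :
    Even (finrank F V) := by
  obtain ⟨τ, halt, hτ, -⟩ := hN
  obtain ⟨n, b, -⟩ := exists_symplectic_basis halt hτ
  exact ⟨n, by simp [finrank_eq_card_basis b]⟩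

theorem IsConfSymplectic.two_mul_trace {N : V →ₗ[F] V} {c : F} (hN : IsConfSymplectic N c) :
    2 * LinearMap.trace F V N = c * finrank F V := by
  obtain ⟨τ, -, hτ, hN⟩ := hN
  have hconj : (τ.toDual hτ).conj N + Dual.transpose (R := F) N = c • LinearMap.id := by
    ext φ y
    obtain ⟨x, rfl⟩ := (τ.toDual hτ).surjective φ
    simpa [LinearEquiv.conj_apply_apply, Dual.transpose_apply,
      LinearMap.BilinForm.toDual_def] using hN x y
  have htrace := congr(LinearMap.trace F (Dual F V) $hconj)
  rwa [map_add, map_smul, LinearMap.trace_id, LinearMap.trace_conj', LinearMap.trace_transpose',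
    Subspace.dual_finrank_eq, ← two_mul, smul_eq_mul] at htrace

theorem exists_isometry_of_finrank_eq {V' : Type*} [AddCommGroup V'] [Module F V']
    [FiniteDimensional F V'] {τ : LinearMap.BilinForm F V} (halt : τ.IsAlt) (hτ : τ.Nondegenerate)
    {τ' : LinearMap.BilinForm F V'} (halt' : τ'.IsAlt) (hτ' : τ'.Nondegenerate)
    (h : finrank F V = finrank F V') :
    ∃ e : V ≃ₗ[F] V', ∀ x y, τ' (e x) (e y) = τ x y := by
  obtain ⟨n, b, hb⟩ := exists_symplectic_basis halt hτ
  obtain ⟨n', b', hb'⟩ := exists_symplectic_basis halt' hτ'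
  obtain rfl : n = n' := by
    simp only [finrank_eq_card_basis b, finrank_eq_card_basis b', Fintype.card_sum,
      Fintype.card_fin] at h
    lia
  refine ⟨b.equiv b' (Equiv.refl _), fun x y => ?_⟩
  have hext : τ'.compl₁₂ (b.equiv b' (Equiv.refl _)).toLinearMap
      (b.equiv b' (Equiv.refl _)).toLinearMap = τ :=
    LinearMap.BilinForm.ext_basis b fun s t => by simp [hb, hb', -Sum.forall]
  exact congr($hext x y)

theorem isConfSymplectic_zero_of_range_eq_ker {N : V →ₗ[F] V}
    (hN : LinearMap.range N = LinearMap.ker N) : IsConfSymplectic N 0 := by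
  obtain ⟨π, hπ⟩ := (LinearMap.ker N).subtype.exists_leftInverse_of_injective
    (LinearMap.ker N).ker_subtype
  let N' : V →ₗ[F] LinearMap.ker N := N.codRestrict _ fun x => hN.le ⟨x, rfl⟩
  let q : LinearMap.BilinForm F (LinearMap.ker N) := Matrix.toBilin (finBasis F _) 1
  have hq : q.SeparatingLeft :=
    ((Matrix.nondegenerate_toBilin_iff _).2 (Matrix.nondegenerate_of_det_ne_zero (by simp))).1
  have hsymm (x y) : q x y = q y x := by
    simp [q, Matrix.toBilin_apply, Matrix.one_apply, mul_comm]
  have hπker {z : V} (hz : N z = 0) : π z = ⟨z, hz⟩ := congr($hπ ⟨z, hz⟩)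
  have hN' {z : V} (hz : N z = 0) : N' z = 0 := Subtype.ext hz
  have hNN (x : V) : N (N x) = 0 := hN.le ⟨x, rfl⟩
  have hπN (x : V) : π (N x) = N' x := hπker (hNN x)
  let τ : LinearMap.BilinForm F V := q.compl₁₂ π N' - q.compl₁₂ N' π
  have hτ (x y : V) : τ x y = q (π x) (N' y) - q (N' x) (π y) := rfl
  have halt : τ.IsAlt := fun x => by rw [hτ, hsymm, sub_self]
  refine ⟨τ, halt, halt.isRefl.nondegenerate_iff_separatingLeft.2 fun x hx => ?_, fun x y => ?_⟩
  · have hNx : N x = 0 := by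
      refine congrArg Subtype.val (hq (N' x) fun z => ?_)
      simpa [hτ, hN' z.2, hπker z.2] using hx z
    have hπx : π x = 0 := hq _ fun z => by
      obtain ⟨y, hy⟩ : (z : V) ∈ LinearMap.range N := hN.ge z.2
      have hz : N' y = z := Subtype.ext hy
      simpa [hτ, hN' hNx, hz] using hx y
    exact congrArg Subtype.val ((hπker hNx).symm.trans hπx)
  · rw [hτ, hτ, hN' (hNN x), hN' (hNN y), hπN, hπN]
    simp

end FiniteDimensional

theorem two_mul_sum_apply_eq_trace {ι : Type*} [Fintype ι] [DecidableEq ι] (b : Basis (ι ⊕ ι) F V)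
    {δ : LinearMap.BilinForm F V} (hδ : δ.IsAlt) :
    2 * ∑ i, δ (b (.inl i)) (b (.inr i)) =
      (Matrix.J ι F * LinearMap.BilinForm.toMatrix b δ).trace := by
  have hneg (i) : -δ (b (.inr i)) (b (.inl i)) = δ (b (.inl i)) (b (.inr i)) := hδ.neg_eq _ _
  simp [Matrix.trace, Matrix.mul_apply, Matrix.J, Matrix.one_apply, hneg, two_mul]

theorem sum_apply_add_apply_eq_mul_sum [NeZero (2 : F)] {ι : Type*} [Fintype ι] [DecidableEq ι]
    {τ : LinearMap.BilinForm F V} {b : Basis (ι ⊕ ι) F V}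
    (hb : ∀ s t, τ (b s) (b t) = Matrix.J ι F s t)
    {N : V →ₗ[F] V} {c : F} (hN : ∀ x y, τ (N x) y + τ x (N y) = c * τ x y)
    {γ : LinearMap.BilinForm F V} (hγ : γ.IsAlt) :
    ∑ i, (γ (N (b (.inl i))) (b (.inr i)) + γ (b (.inl i)) (N (b (.inr i)))) =
      c * ∑ i, γ (b (.inl i)) (b (.inr i)) := by
  set J := Matrix.J ι F
  set M := LinearMap.toMatrix b b N
  set G := LinearMap.BilinForm.toMatrix b γ with hG
  have hτ : LinearMap.BilinForm.toMatrix b τ = J := by ext s t; simp [hb]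
  have hM : M.transpose * J + J * M = c • J := by
    have : τ.compLeft N + τ.compRight N = c • τ := LinearMap.ext₂ hN
    simpa [hτ, M, LinearMap.BilinForm.toMatrix_compLeft,
      LinearMap.BilinForm.toMatrix_compRight] using congr(LinearMap.BilinForm.toMatrix b $this)
  have hM' : J * M.transpose + M * J = c • J := by
    have hJJ : J * J = -1 := Matrix.J_squared ι F
    calc J * M.transpose + M * J = -(J * M.transpose * (J * J) + J * J * M * J) := by
          simp [hJJ, add_comm]
      _ = -(J * (M.transpose * J + J * M) * J) := by simp only [mul_add, add_mul, mul_assoc]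
      _ = c • J := by simp [hM, hJJ]
  have hδ : (γ.compLeft N + γ.compRight N).IsAlt := fun x => by
    simp [← hγ.neg_eq x (N x)]
  refine mul_left_cancel₀ (NeZero.ne (2 : F)) ?_
  calc 2 * ∑ i, (γ (N (b (.inl i))) (b (.inr i)) + γ (b (.inl i)) (N (b (.inr i))))
      = (J * (M.transpose * G + G * M)).trace := by
        simpa [M, hG, LinearMap.BilinForm.toMatrix_compLeft,
          LinearMap.BilinForm.toMatrix_compRight] using two_mul_sum_apply_eq_trace b hδ
    _ = ((J * M.transpose + M * J) * G).trace := by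
        rw [mul_add, add_mul, Matrix.trace_add, Matrix.trace_add, Matrix.mul_assoc,
          ← Matrix.mul_assoc J G, Matrix.trace_mul_comm (J * G), Matrix.mul_assoc]
    _ = c * (2 * ∑ i, γ (b (.inl i)) (b (.inr i))) := by
        rw [hM', two_mul_sum_apply_eq_trace b hγ, Matrix.smul_mul, Matrix.trace_smul, smul_eq_mul]
    _ = _ := mul_left_comm ..

end ConformalSymplectic

section SelfAdjoint

variable {F V : Type*} [Field F] [AddCommGroup V] [Module F V] {σ : LinearMap.BilinForm F V}

theorem apply_eq_zero_of_mem_span {s t : Set V} (h : ∀ x ∈ s, ∀ y ∈ t, σ x y = 0) {x y : V}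
    (hx : x ∈ Submodule.span F s) (hy : y ∈ Submodule.span F t) : σ x y = 0 := by
  have hs : ∀ z ∈ t, Submodule.span F s ≤ LinearMap.ker (σ.flip z) := fun z hz =>
    Submodule.span_le.2 fun w hw => h w hw z hz
  have ht : Submodule.span F t ≤ LinearMap.ker (σ x) :=
    Submodule.span_le.2 fun z hz => hs z hz hx
  exact ht hy

variable {B : End F V}

theorem apply_pow_eq_apply_pow (hB : ∀ x y, σ (B x) y = σ x (B y)) (n : ℕ) (x y : V) :
    σ ((B ^ n) x) y = σ x ((B ^ n) y) := by
  induction n generalizing x with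
  | zero => rfl
  | succ n ih =>
    rw [pow_succ, Module.End.mul_apply, ih, hB, ← Module.End.mul_apply, ← pow_succ', pow_succ]

theorem apply_pow_self_eq_zero [NeZero (2 : F)] (halt : σ.IsAlt)
    (hB : ∀ x y, σ (B x) y = σ x (B y)) (n : ℕ) (y : V) : σ y ((B ^ n) y) = 0 := by
  have hneg : σ y ((B ^ n) y) = -σ y ((B ^ n) y) := by rw [halt.neg_eq, apply_pow_eq_apply_pow hB]
  have htwo : 2 * σ y ((B ^ n) y) = 0 := by linear_combination hneg
  exact (mul_eq_zero.1 htwo).resolve_left (NeZero.ne 2)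

theorem exists_invariant_lagrangian [FiniteDimensional F V] [NeZero (2 : F)] (halt : σ.IsAlt)
    (hB : ∀ x y, σ (B x) y = σ x (B y)) :
    ∃ L : Submodule F V, (∀ x ∈ L, B x ∈ L) ∧ σ.orthogonal L = L := by
  obtain ⟨L, ⟨hBL, hL⟩, hmax⟩ := exists_maximal_of_wellFoundedGT
    (fun L : Submodule F V => (∀ x ∈ L, B x ∈ L) ∧ ∀ x ∈ L, ∀ y ∈ L, σ x y = 0) ⟨⊥, by simp⟩
  refine ⟨L, hBL, le_antisymm (fun y hy => ?_) fun x hx y hy => hL y hy x hx⟩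
  have hBL_pow (n : ℕ) : ∀ x ∈ L, (B ^ n) x ∈ L := by
    induction n with
    | zero => exact fun _ => id
    | succ _ ih => exact fun x hx => ih _ (hBL x hx)
  have hLy (n : ℕ) : ∀ x ∈ L, σ x ((B ^ n) y) = 0 := fun x hx => by
    rw [← apply_pow_eq_apply_pow hB]
    exact hy _ (hBL_pow n x hx)
  set s : Set V := L ∪ Set.range fun n => (B ^ n) y
  have hBs : Submodule.span F s ≤ (Submodule.span F s).comap B := by
    refine Submodule.span_le.2 (Set.union_subset (fun x hx => ?_) ?_)
    · exact Submodule.subset_span (.inl (hBL x hx))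
    · rintro _ ⟨n, rfl⟩
      exact Submodule.subset_span (.inr ⟨n + 1, congr($(pow_succ' B n) y)⟩)
  have hs : ∀ x ∈ s, ∀ z ∈ s, σ x z = 0 := by
    rintro x (hx | ⟨m, rfl⟩) z (hz | ⟨n, rfl⟩)
    · exact hL x hx z hz
    · exact hLy n x hx
    · exact halt.eq_iff.1 (hLy m z hz)
    · change σ ((B ^ m) y) ((B ^ n) y) = 0
      rw [apply_pow_eq_apply_pow hB, ← Module.End.mul_apply, ← pow_add,
        apply_pow_self_eq_zero halt hB]
  exact hmax ⟨hBs, fun x hx z hz => apply_eq_zero_of_mem_span hs hx hz⟩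
    (fun x hx => Submodule.subset_span (.inl hx)) (Submodule.subset_span (.inr ⟨0, rfl⟩))

end SelfAdjoint

section RealEigenvalue

open Polynomial in
theorem exists_isRoot_of_odd_natDegree {p : ℝ[X]} (hp : Odd p.natDegree) : ∃ x, p.IsRoot x := by
  induction h : p.natDegree using Nat.strong_induction_on generalizing p with
  | _ n ih =>
  have hp0 : p ≠ 0 := by rintro rfl; simp at hp
  have hunit : ¬IsUnit p := fun hu => by simp [natDegree_eq_zero_of_isUnit hu] at hp
  obtain ⟨q, hq, r, rfl⟩ := WfDvdMonoid.exists_irreducible_factor hunit hp0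
  obtain ⟨hq0, hr0⟩ := mul_ne_zero_iff.1 hp0
  rw [natDegree_mul hq0 hr0] at h hp
  have hqpos := hq.natDegree_pos
  rcases hq.natDegree_le_two.lt_or_eq with hlt | hq2
  · obtain ⟨x, hx⟩ := exists_root_of_degree_eq_one
      ((degree_eq_iff_natDegree_eq hq0).2 (show q.natDegree = 1 by lia))
    exact ⟨x, root_mul_right_of_isRoot r hx⟩
  · obtain ⟨x, hx⟩ := ih r.natDegree (by lia) (by grind) rfl
    exact ⟨x, root_mul_left_of_isRoot q hx⟩

variable {V : Type*} [AddCommGroup V] [Module ℝ V] [FiniteDimensional ℝ V]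

theorem exists_hasEigenvalue_of_odd_finrank (B : End ℝ V) (h : Odd (finrank ℝ V)) :
    ∃ μ, B.HasEigenvalue μ := by
  simp_rw [Module.End.hasEigenvalue_iff_isRoot_charpoly]
  exact exists_isRoot_of_odd_natDegree (by rwa [LinearMap.charpoly_natDegree])

theorem exists_hasEigenvalue_of_odd_half_finrank {σ : LinearMap.BilinForm ℝ V} (halt : σ.IsAlt)
    (hσ : σ.Nondegenerate) {B : End ℝ V} (hB : ∀ x y, σ (B x) y = σ x (B y)) {n : ℕ} (hn : Odd n)
    (hV : finrank ℝ V = 2 * n) : ∃ μ, B.HasEigenvalue μ := by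
  obtain ⟨L, hBL, hL⟩ := exists_invariant_lagrangian halt hB
  have hfinrank : finrank ℝ L = n := by
    have := LinearMap.BilinForm.finrank_orthogonal hσ L
    have := L.finrank_le
    rw [hL] at *
    lia
  obtain ⟨μ, hμ⟩ := exists_hasEigenvalue_of_odd_finrank (B.restrict hBL) (hfinrank ▸ hn)
  obtain ⟨x, hx⟩ := hμ.exists_hasEigenvector
  exact ⟨μ, Module.End.hasEigenvalue_of_hasEigenvector (x := (x : V))
    ⟨Module.End.mem_eigenspace_iff.2 congr(($hx.apply_eq_smul : V)), by simpa using hx.2⟩⟩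

end RealEigenvalue

section SymplecticEndomorphism

section Field

variable {F V : Type*} [Field F] [AddCommGroup V] [Module F V]

theorem isConfSymplecticOn_range_of_commute [NeZero (2 : F)] {σ : LinearMap.BilinForm F V}
    (halt : σ.IsAlt) (hσ : σ.Nondegenerate) {A P : End F V} {c : F}
    (hA : ∀ x y, σ (A x) y + σ x (A y) = c * σ x y) (hP : ∀ x y, σ (P x) y = σ x (P y))
    (hAP : Commute A P) : IsConfSymplecticOn A c (LinearMap.range P) := by
  refine isConfSymplecticOn_range (β := σ.compLeft P) hAP.eq (fun x => ?_) ?_ fun x y => ?_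
  · simpa [hP] using apply_pow_self_eq_zero halt hP 1 x
  · refine le_antisymm (fun x hx => ?_) fun x hx => hσ.1 _ fun y => congr($hx y)
    exact LinearMap.ext fun y => by simp [LinearMap.mem_ker.1 hx]
  · have hPA : P (A x) = A (P x) := congr($hAP.eq.symm x)
    simpa [hPA] using hA (P x) y

theorem isConfSymplecticOn_orthogonal_span_pair [FiniteDimensional F V]
    {σ : LinearMap.BilinForm F V} (halt : σ.IsAlt) (hσ : σ.Nondegenerate) {A : End F V} {c : F}
    (hA : ∀ x y, σ (A x) y + σ x (A y) = c * σ x y) {x y : V} (hxy : σ x y ≠ 0)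
    (hx : A x ∈ Submodule.span F {x, y}) (hy : A y ∈ Submodule.span F {x, y}) :
    IsConfSymplecticOn A c (σ.orthogonal (Submodule.span F {x, y})) := by
  have hspan : Submodule.span F {x, y} ≤ (Submodule.span F {x, y}).comap A :=
    Submodule.span_le.2 (Set.pair_subset hx hy)
  exact isConfSymplecticOn_of_restrict_nondegenerate halt hA (apply_mem_orthogonal hA hspan)
    (restrict_orthogonal_nondegenerate halt hσ (restrict_span_pair_nondegenerate halt hxy))

theorem isConfSymplecticOn_ker_mul_self [FiniteDimensional F V] {A : End F V}
    (h : finrank F (LinearMap.ker (A * A)) = 2 * finrank F (LinearMap.ker A)) :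
    IsConfSymplecticOn A 0 (LinearMap.ker (A * A)) := by
  have hker : LinearMap.ker A ≤ LinearMap.ker (A * A) := LinearMap.ker_le_ker_comp A A
  have hA : ∀ x ∈ LinearMap.ker (A * A), A x ∈ LinearMap.ker (A * A) := fun x hx => hker hx
  refine ⟨hA, isConfSymplectic_zero_of_range_eq_ker (Submodule.eq_of_le_of_finrank_eq ?_ ?_)⟩
  · rintro _ ⟨x, rfl⟩
    exact Subtype.ext x.2
  · have hrank := (A.restrict hA).finrank_range_add_finrank_ker
    have hker' : finrank F (LinearMap.ker (A.restrict hA)) = finrank F (LinearMap.ker A) := by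
      rw [LinearMap.ker_restrict]
      exact (Submodule.comapSubtypeEquivOfLe hker).finrank_eq
    lia

theorem two_mul_finrank_le_of_le_orthogonal [FiniteDimensional F V] {σ : LinearMap.BilinForm F V}
    (hσ : σ.Nondegenerate) {L : Submodule F V} (hL : L ≤ σ.orthogonal L) :
    2 * finrank F L ≤ finrank F V := by
  have := LinearMap.BilinForm.finrank_orthogonal hσ L
  have := Submodule.finrank_mono hL
  have := L.finrank_le
  lia

theorem mul_self_eq_zero_of_finrank_le [FiniteDimensional F V] {σ : LinearMap.BilinForm F V}
    (hσ : σ.Nondegenerate) {A : End F V} (hA : ∀ x y, σ (A x) y + σ x (A y) = 0)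
    (hiso : LinearMap.ker A ≤ σ.orthogonal (LinearMap.ker A))
    (hle : finrank F V ≤ 2 * finrank F (LinearMap.ker A)) : A * A = 0 := by
  have hlagrangian : LinearMap.ker A = σ.orthogonal (LinearMap.ker A) :=
    Submodule.eq_of_le_of_finrank_le hiso (by
      rw [LinearMap.BilinForm.finrank_orthogonal hσ]
      lia)
  have hrange (x : V) : A x ∈ σ.orthogonal (LinearMap.ker A) := fun z hz => by
    simpa [LinearMap.mem_ker.1 hz] using hA z x
  exact LinearMap.ext fun x => hlagrangian.ge (hrange x)

theorem map_le_orthogonal [NeZero (2 : F)] {σ : LinearMap.BilinForm F V} (halt : σ.IsAlt)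
    {A : End F V} (hA : ∀ x y, σ (A x) y + σ x (A y) = 0) {K : Submodule F V}
    (hquad : ∀ x ∈ K, σ x (A x) = 0) : K.map A ≤ σ.orthogonal K := by
  rintro _ ⟨y, hy, rfl⟩ x hx
  have hpolar := hquad _ (add_mem hx hy)
  simp only [map_add, LinearMap.add_apply, hquad x hx, hquad y hy] at hpolar
  have hneg : σ (A x) y = -σ y (A x) := (halt.neg_eq _ _).symm
  have htwo : 2 * σ x (A y) = 0 := by linear_combination hpolar + hA x y - hneg
  exact (mul_eq_zero.1 htwo).resolve_left (NeZero.ne 2)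

theorem two_mul_finrank_le_of_map_le_orthogonal [FiniteDimensional F V]
    {σ : LinearMap.BilinForm F V} (hσ : σ.Nondegenerate) {A : End F V} {K : Submodule F V}
    (h : K.map A ≤ σ.orthogonal K) :
    2 * finrank F K ≤ finrank F V + finrank F (K ⊓ LinearMap.ker A : Submodule F V) := by
  have hrank := (A.domRestrict K).finrank_range_add_finrank_ker
  have hker : finrank F (LinearMap.ker (A.domRestrict K)) =
      finrank F (K ⊓ LinearMap.ker A : Submodule F V) := by
    rw [← Submodule.map_comap_subtype, LinearMap.ker_domRestrict]
    exact (Submodule.finrank_map_subtype_eq _ _).symm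
  have horth := LinearMap.BilinForm.finrank_orthogonal hσ K
  have := Submodule.finrank_mono h
  have := K.finrank_le
  rw [LinearMap.range_domRestrict] at hrank
  lia

theorem isConfSymplecticOn_ker_of_map_le_orthogonal [FiniteDimensional F V]
    {σ : LinearMap.BilinForm F V} (hσ : σ.Nondegenerate) {A : End F V}
    (hA : ∀ x y, σ (A x) y + σ x (A y) = 0)
    (hiso : LinearMap.ker A ≤ σ.orthogonal (LinearMap.ker A)) (hV : finrank F V = 6)
    {μ : F} (hmap : (End.eigenspace (A * A) μ).map A ≤ σ.orthogonal (End.eigenspace (A * A) μ))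
    (hK : finrank F (End.eigenspace (A * A) μ) = 4) :
    IsConfSymplecticOn A 0 (End.eigenspace (A * A) μ) := by
  have hdim := two_mul_finrank_le_of_map_le_orthogonal hσ hmap
  obtain ⟨x, hx, hx0⟩ : ∃ x ∈ End.eigenspace (A * A) μ ⊓ LinearMap.ker A, x ≠ 0 :=
    Submodule.exists_mem_ne_zero_of_ne_bot fun h => by
      rw [h, finrank_bot] at hdim
      lia
  obtain rfl : μ = 0 := by
    have hAA : A (A x) = μ • x := End.mem_eigenspace_iff.1 hx.1
    rw [LinearMap.mem_ker.1 hx.2, map_zero] at hAA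
    exact (smul_eq_zero.1 hAA.symm).resolve_right hx0
  rw [End.eigenspace_zero] at *
  have hlt : 2 * finrank F (LinearMap.ker A) < finrank F V := by
    by_contra! hle
    rw [mul_self_eq_zero_of_finrank_le hσ hA hiso hle, LinearMap.ker_zero, finrank_top] at hK
    lia
  have := Submodule.finrank_mono (inf_le_right : LinearMap.ker (A * A) ⊓ LinearMap.ker A ≤ _)
  exact isConfSymplecticOn_ker_mul_self (by lia)

end Field

variable {V : Type*} [AddCommGroup V] [Module ℝ V] [FiniteDimensional ℝ V]

theorem exists_isConfSymplecticOn_zero_of_isotropic {σ : LinearMap.BilinForm ℝ V} (halt : σ.IsAlt)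
    (hσ : σ.Nondegenerate) {A : End ℝ V} (hA : ∀ x y, σ (A x) y + σ x (A y) = 0)
    (hker : LinearMap.ker A ≤ σ.orthogonal (LinearMap.ker A))
    (hquad : ∀ μ, ∀ x ∈ End.eigenspace (A * A) μ, σ x (A x) = 0) (hV : finrank ℝ V = 6) :
    ∃ W : Submodule ℝ V, finrank ℝ W = 4 ∧ IsConfSymplecticOn A 0 W := by
  have hB (x y : V) : σ ((A * A) x) y = σ x ((A * A) y) := by
    simp only [Module.End.mul_apply]
    linear_combination hA (A x) y - hA x (A y)
  obtain ⟨μ, hμ⟩ := exists_hasEigenvalue_of_odd_half_finrank halt hσ hB (n := 3) (by decide) hV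
  have hmap := map_le_orthogonal halt hA (hquad μ)
  have hrange : IsConfSymplecticOn A 0 (LinearMap.range (A * A - μ • 1)) := by
    have hcomm : Commute A (A * A - μ • 1) :=
      ((Commute.refl A).mul_right (Commute.refl A)).sub_right ((Commute.one_right A).smul_right μ)
    exact isConfSymplecticOn_range_of_commute halt hσ (by simpa using hA)
      (fun x y => by simpa using hB x y) hcomm
  set K := End.eigenspace (A * A) μ with hK
  obtain ⟨k, hk⟩ := hrange.choose_spec.even_finrank
  have hrank := (A * A - μ • 1).finrank_range_add_finrank_ker
  rw [← End.eigenspace_def, ← hK] at hrank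
  have hpos : 0 < finrank ℝ K := Submodule.one_le_finrank_iff.2 hμ
  obtain h | h | h : finrank ℝ K = 6 ∨ finrank ℝ K = 4 ∨ finrank ℝ K = 2 := by lia
  · have := two_mul_finrank_le_of_map_le_orthogonal hσ hmap
    have := two_mul_finrank_le_of_le_orthogonal hσ hker
    have := Submodule.finrank_mono (inf_le_right : K ⊓ LinearMap.ker A ≤ _)
    lia
  · exact ⟨K, h, isConfSymplecticOn_ker_of_map_le_orthogonal hσ hA hker hV hmap h⟩
  · exact ⟨_, by lia, hrange⟩

theorem exists_isConfSymplecticOn_zero_of_finrank_eq_six {A : End ℝ V}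
    (hA : IsConfSymplectic A 0) (hV : finrank ℝ V = 6) :
    ∃ W : Submodule ℝ V, finrank ℝ W = 4 ∧ IsConfSymplecticOn A 0 W := by
  obtain ⟨σ, halt, hσ, hA⟩ := hA
  by_cases hplane : ∃ x y, σ x y ≠ 0 ∧ A x ∈ Submodule.span ℝ {x, y} ∧ A y ∈ Submodule.span ℝ {x, y}
  · obtain ⟨x, y, hxy, hx, hy⟩ := hplane
    have hfinrank := finrank_orthogonal_span_pair halt hσ hxy
    exact ⟨_, by lia, isConfSymplecticOn_orthogonal_span_pair halt hσ hA hxy hx hy⟩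
  push Not at hplane
  refine exists_isConfSymplecticOn_zero_of_isotropic halt hσ (by simpa using hA) ?_ ?_ hV
  · intro y hy x hx
    by_contra hxy
    rw [LinearMap.mem_ker] at hx hy
    exact hplane x y hxy (by simp [hx]) (by simp [hy])
  · intro μ x hx
    by_contra hxA
    have hAA : A (A x) = μ • x := End.mem_eigenspace_iff.1 hx
    exact hplane x (A x) hxA (Submodule.subset_span (by simp))
      (hAA ▸ Submodule.smul_mem _ _ (Submodule.subset_span (by simp)))

theorem exists_isConfSymplecticOn_trace_of_four_le_finrank {A : End ℝ V} (hV : finrank ℝ V = 6)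
    {W : Submodule ℝ V} (hW : 4 ≤ finrank ℝ W)
    (h : IsConfSymplecticOn A (LinearMap.trace ℝ V A) W) :
    ∃ W' : Submodule ℝ V, finrank ℝ W' = 4 ∧ IsConfSymplecticOn A (LinearMap.trace ℝ V A) W' := by
  obtain ⟨k, hk⟩ := h.choose_spec.even_finrank
  have := W.finrank_le
  obtain h4 | h6 : finrank ℝ W = 4 ∨ finrank ℝ W = finrank ℝ V := by lia
  · exact ⟨W, h4, h⟩
  obtain rfl := Submodule.eq_top_of_finrank_eq h6
  have hconf : IsConfSymplectic A (LinearMap.trace ℝ V A) :=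
    h.choose_spec.conj Submodule.topEquiv
  have htrace : LinearMap.trace ℝ V A = 0 := by
    have := hconf.two_mul_trace
    rw [hV] at this
    norm_num at this
    linarith
  rw [htrace] at hconf ⊢
  exact exists_isConfSymplecticOn_zero_of_finrank_eq_six hconf hV

end SymplecticEndomorphism

section BlockTriangular

variable {F V : Type*} [Field F] [AddCommGroup V] [Module F V]

theorem trace_eq_trace_add_trace_of_isCompl [FiniteDimensional F V] {p q : Submodule F V}
    (h : IsCompl p q) (f : V →ₗ[F] V) :
    LinearMap.trace F V f =
      LinearMap.trace F p (p.projectionOnto q h ∘ₗ f ∘ₗ p.subtype) +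
        LinearMap.trace F q (q.projectionOnto p h.symm ∘ₗ f ∘ₗ q.subtype) := by
  have hsplit : (f ∘ₗ p.subtype) ∘ₗ p.projectionOnto q h +
      (f ∘ₗ q.subtype) ∘ₗ q.projectionOnto p h.symm = f := by
    ext x
    simpa using congrArg f (Submodule.projection_add_projection_eq_self h x)
  rw [← LinearMap.trace_comp_comm' (p.projectionOnto q h),
    ← LinearMap.trace_comp_comm' (q.projectionOnto p h.symm), ← map_add, hsplit]

theorem exists_skew_add_smul_iff [NeZero (2 : F)] (τ : LinearMap.BilinForm F V) (N : V →ₗ[F] V)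
    (t : F) :
    (∃ N₀ : V →ₗ[F] V, (∀ x y, τ (N₀ x) y + τ x (N₀ y) = 0) ∧ ∀ x, N x = -(t / 2) • x + N₀ x) ↔
      ∀ x y, τ (N x) y + τ x (N y) = -t * τ x y := by
  have h2 : (2 : F) ≠ 0 := NeZero.ne 2
  constructor
  · rintro ⟨N₀, hN₀, hN⟩ x y
    simp only [hN, map_add, map_smul, LinearMap.add_apply, LinearMap.smul_apply, smul_eq_mul]
    linear_combination hN₀ x y - τ x y * div_mul_cancel₀ t h2
  · intro hN
    refine ⟨N + (t / 2) • LinearMap.id, fun x y => ?_, fun x => by simp⟩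
    simp only [map_add, map_smul, LinearMap.add_apply, LinearMap.smul_apply, LinearMap.id_apply,
      smul_eq_mul]
    linear_combination hN x y + τ x y * div_mul_cancel₀ t h2

/-- If `f` is conformally symplectic with factor `c` on the four-dimensional `q`, then it has trace
`2 * c` there, so that `c = -tr f₂` is the same as `c = tr f`. -/
theorem exists_skew_projectionOnto_iff [NeZero (2 : F)] [FiniteDimensional F V]
    {p q : Submodule F V} (h : IsCompl p q) (hq : finrank F q = 4) {τ : LinearMap.BilinForm F q}
    (halt : τ.IsAlt) (hτ : τ.Nondegenerate) {f : V →ₗ[F] V} (hf : ∀ x ∈ q, f x ∈ q) :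
    (∃ f₀ : q →ₗ[F] q, (∀ x y, τ (f₀ x) y + τ x (f₀ y) = 0) ∧
        ∀ x : q, q.projectionOnto p h.symm (f x) =
          -(LinearMap.trace F p (p.projectionOnto q h ∘ₗ f ∘ₗ p.subtype) / 2) • x + f₀ x) ↔
      ∀ x y, τ (f.restrict hf x) y + τ x (f.restrict hf y) = LinearMap.trace F V f * τ x y := by
  have hproj : q.projectionOnto p h.symm ∘ₗ f ∘ₗ q.subtype = f.restrict hf :=
    LinearMap.ext fun x => Submodule.projectionOnto_apply_left h.symm (f.restrict hf x)
  have htrace := trace_eq_trace_add_trace_of_isCompl h f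
  have hskew := exists_skew_add_smul_iff τ (f.restrict hf)
    (LinearMap.trace F p (p.projectionOnto q h ∘ₗ f ∘ₗ p.subtype))
  rw [← hproj] at hskew
  refine hskew.trans ?_
  rw [hproj] at htrace ⊢
  have hfactor {c : F} (hc : ∀ x y, τ (f.restrict hf x) y + τ x (f.restrict hf y) = c * τ x y) :
      LinearMap.trace F q (f.restrict hf) = 2 * c := by
    refine mul_left_cancel₀ (NeZero.ne (2 : F)) ?_
    rw [IsConfSymplectic.two_mul_trace ⟨τ, halt, hτ, hc⟩, hq]
    push_cast
    ring
  refine ⟨fun hc => ?_, fun hc => ?_⟩ <;> convert hc using 4 <;>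
    linear_combination htrace + hfactor hc

theorem IsConfSymplecticOn.map {V' : Type*} [AddCommGroup V'] [Module F V'] {A : V →ₗ[F] V} {c : F}
    {W : Submodule F V} (h : IsConfSymplecticOn A c W) (T : V ≃ₗ[F] V') :
    IsConfSymplecticOn (T.conj A) c (W.map T.toLinearMap) := by
  obtain ⟨hW, hA⟩ := h
  have hTW : ∀ x ∈ W.map T.toLinearMap, T.conj A x ∈ W.map T.toLinearMap := by
    rintro _ ⟨x, hx, rfl⟩
    exact ⟨A x, hW x hx, by simp [LinearEquiv.conj_apply_apply]⟩
  refine ⟨hTW, ?_⟩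
  convert hA.conj (T.submoduleMap W)
  ext x
  simp [LinearEquiv.conj_apply_apply]

theorem exists_equiv_map_eq_restrict [FiniteDimensional F V] {W W' : Submodule F V}
    (e : W ≃ₗ[F] W') : ∃ T : V ≃ₗ[F] V, ∀ x : W, T x = e x := by
  obtain ⟨K, hK⟩ := W.exists_isCompl
  obtain ⟨K', hK'⟩ := W'.exists_isCompl
  have hfinrank : finrank F K = finrank F K' := by
    have := Submodule.finrank_add_eq_of_isCompl hK
    have := Submodule.finrank_add_eq_of_isCompl hK'
    have := e.finrank_eq
    lia
  exact ⟨(W.prodEquivOfIsCompl K hK).symm ≪≫ₗ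
    e.prodCongr (LinearEquiv.ofFinrankEq _ _ hfinrank) ≪≫ₗ W'.prodEquivOfIsCompl K' hK',
    fun x => by simp⟩

theorem exists_conj_restrict_add_eq [FiniteDimensional F V] {A : V →ₗ[F] V} {c : F}
    {W W' : Submodule F V} (hW : IsConfSymplecticOn A c W) (hfinrank : finrank F W = finrank F W')
    {τ : LinearMap.BilinForm F W'} (halt : τ.IsAlt) (hτ : τ.Nondegenerate) :
    ∃ (T : V ≃ₗ[F] V) (hT : ∀ x ∈ W', T.conj A x ∈ W'), ∀ x y,
      τ ((T.conj A).restrict hT x) y + τ x ((T.conj A).restrict hT y) = c * τ x y := by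
  obtain ⟨hAW, σ, hσalt, hσ, hA⟩ := hW
  obtain ⟨e, he⟩ := exists_isometry_of_finrank_eq hσalt hσ halt hτ hfinrank
  obtain ⟨T, hT⟩ := exists_equiv_map_eq_restrict e
  have hconj (x : W') : T.conj A x = e (A.restrict hAW (e.symm x)) := by
    rw [LinearEquiv.conj_apply_apply, ← hT, LinearMap.coe_restrict_apply]
    congr
    rw [LinearEquiv.symm_apply_eq, hT, e.apply_symm_apply]
  have hmem : ∀ x ∈ W', T.conj A x ∈ W' := fun x hx => by
    rw [hconj ⟨x, hx⟩]
    exact SetLike.coe_mem _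
  have hrestrict (x : W) : (T.conj A).restrict hmem (e x) = e (A.restrict hAW x) :=
    Subtype.ext (by simp [hconj])
  refine ⟨T, hmem, fun x y => ?_⟩
  obtain ⟨x, rfl⟩ := e.surjective x
  obtain ⟨y, rfl⟩ := e.surjective y
  simp only [hrestrict, he, hA]

theorem exists_similar_skew_projectionOnto_iff [NeZero (2 : F)] [FiniteDimensional F V]
    {p q : Submodule F V} (h : IsCompl p q) (hq : finrank F q = 4) {τ : LinearMap.BilinForm F q}
    (halt : τ.IsAlt) (hτ : τ.Nondegenerate) (A : V →ₗ[F] V) :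
    (∃ T : V ≃ₗ[F] V, ∃ f : V →ₗ[F] V, f = T.toLinearMap ∘ₗ A ∘ₗ T.symm.toLinearMap ∧
        (∀ x ∈ q, f x ∈ q) ∧
        ∃ f₀ : q →ₗ[F] q, (∀ x y, τ (f₀ x) y + τ x (f₀ y) = 0) ∧
          ∀ x : q, q.projectionOnto p h.symm (f x) =
            -(LinearMap.trace F p (p.projectionOnto q h ∘ₗ f ∘ₗ p.subtype) / 2) • x + f₀ x) ↔
      ∃ W : Submodule F V, finrank F W = 4 ∧ IsConfSymplecticOn A (LinearMap.trace F V A) W := by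
  constructor
  · rintro ⟨T, f, rfl, hf, hskew⟩
    have hconj : IsConfSymplecticOn (T.conj A) (LinearMap.trace F V (T.conj A)) q :=
      ⟨hf, τ, halt, hτ, (exists_skew_projectionOnto_iff h hq halt hτ hf).1 hskew⟩
    refine ⟨q.map T.symm.toLinearMap, (T.symm.finrank_map_eq q).trans hq, ?_⟩
    simpa using hconj.map T.symm
  · rintro ⟨W, hW, hA⟩
    obtain ⟨T, hT, hconj⟩ := exists_conj_restrict_add_eq hA (hW.trans hq.symm) halt hτ
    rw [← LinearMap.trace_conj' A T] at hconj
    exact ⟨T, T.conj A, rfl, hT, (exists_skew_projectionOnto_iff h hq halt hτ hT).2 hconj⟩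

end BlockTriangular

section TwoSlots

variable {R M N ι : Type*} [CommRing R] [AddCommGroup M] [Module R M] [AddCommGroup N] [Module R N]
  [DecidableEq ι]

/-- The bilinear map obtained from an alternating form by freezing all arguments but those in the
slots `i` and `j`, as `v` prescribes. -/
def twoSlots (Ω : M [⋀^ι]→ₗ[R] N) (v : ι → M) {i j : ι} (hij : i ≠ j) : M →ₗ[R] M →ₗ[R] N :=
  LinearMap.mk₂ R (fun x y => Ω (update (update v i x) j y))
    (fun x x' y => by simp only [Function.update_comm hij, Ω.map_update_add])
    (fun c x y => by simp only [Function.update_comm hij, Ω.map_update_smul])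
    (fun x y y' => Ω.map_update_add _ j y y') (fun c x y => Ω.map_update_smul _ j c y)

theorem twoSlots_apply (Ω : M [⋀^ι]→ₗ[R] N) (v : ι → M) {i j : ι} (hij : i ≠ j) (x y : M) :
    twoSlots Ω v hij x y = Ω (update (update v i x) j y) := rfl

theorem isAlt_twoSlots (Ω : M [⋀^ι]→ₗ[R] N) (v : ι → M) {i j : ι} (hij : i ≠ j) :
    (twoSlots Ω v hij).IsAlt := fun _ =>
  Ω.map_eq_zero_of_eq _ (by simp [hij]) hij

end TwoSlots

section GTwoStar

/-- The permutations `σ` with `{σ 0, σ 1, σ 2, σ 3}` running through the index sets of the seven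
terms of `stdG2star`; their signs are the coefficients of these terms. -/
def starPerm : Fin 7 → Equiv.Perm (Fin 7) :=
  ![1, c[2, 4, 3, 5], c[0, 2, 4, 1, 3, 5], c[0, 1, 3, 6, 4] * c[2, 5], c[0, 1, 2, 4] * c[3, 6],
    c[1, 3, 6, 2, 4], c[1, 2, 5, 4] * c[3, 6]]

theorem sign_starPerm (t : Fin 7) :
    Equiv.Perm.sign (starPerm t) = (![1, -1, -1, -1, 1, 1, 1] : Fin 7 → ℤˣ) t := by
  revert t; decide

theorem starPerm_apply (t i : Fin 7) : starPerm t i =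
    (![![0, 1, 2, 3, 4, 5, 6], ![0, 1, 4, 5, 3, 2, 6], ![2, 3, 4, 5, 1, 0, 6],
      ![1, 3, 5, 6, 0, 2, 4], ![1, 2, 4, 6, 0, 5, 3], ![0, 3, 4, 6, 1, 5, 2],
      ![0, 2, 5, 6, 1, 4, 3]] : Fin 7 → Fin 7 → Fin 7) t i := by
  revert t i; decide

variable {F V : Type*} [Field F] [AddCommGroup V] [Module F V]

theorem stdG2star_eq_sum (b : Basis (Fin 7) F (Dual F V)) :
    stdG2star b = ∑ t, ((Equiv.Perm.sign (starPerm t) : ℤ) : F) •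
      wedgeCov 4 fun i => b (starPerm t (Fin.castAdd 3 i)) := by
  have hquad (t : Fin 7) : (wedgeCov 4 fun i => b (starPerm t (Fin.castAdd 3 i))) =
      bw b (starPerm t 0) (starPerm t 1) (starPerm t 2) (starPerm t 3) := by
    rw [bw]
    congr 1
    ext i : 1
    fin_cases i <;> rfl
  simp only [hquad]
  simp only [stdG2star, sign_starPerm, starPerm_apply, Fin.sum_univ_seven, Matrix.cons_val,
    Units.val_one, Units.val_neg, Int.cast_one, Int.cast_neg]
  module

theorem sign_mul_contractInl_det_apply {m k : ℕ} (b : Basis (Fin (m + k)) F V)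
    (σ : Equiv.Perm (Fin (m + k))) (θ : Fin k → V) :
    ((Equiv.Perm.sign σ : ℤ) : F) * contractInl (b.reindex finSumFinEquiv.symm).det
        (fun i => b (σ (Fin.castAdd k i))) θ =
      (Matrix.of fun i j => b.repr (θ j) (σ (Fin.natAdd m i))).det := by
  set B := b.reindex finSumFinEquiv.symm
  let ρ : Equiv.Perm (Fin m ⊕ Fin k) := finSumFinEquiv.symm.permCongr σ
  have hblock : (B.toMatrix (Sum.elim (fun i => b (σ (Fin.castAdd k i))) θ)).submatrix ρ id =
      Matrix.fromBlocks 1 (Matrix.of fun i j => b.repr (θ j) (σ (Fin.castAdd k i))) 0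
        (Matrix.of fun i j => b.repr (θ j) (σ (Fin.natAdd m i))) := by
    have hne (i : Fin m) (j : Fin k) : Fin.castAdd k i ≠ Fin.natAdd m j :=
      Fin.ne_of_lt (Fin.lt_def.2 (by simp; lia))
    ext (i | i) (j | j) <;>
      simp [B, ρ, Basis.toMatrix_apply, Finsupp.single_apply, Matrix.one_apply,
        Equiv.permCongr_apply, Fin.castAdd_inj, hne, eq_comm]
  rw [contractInl_apply, Basis.det_apply, ← Equiv.Perm.sign_permCongr finSumFinEquiv.symm σ,
    ← Matrix.det_permute, hblock, Matrix.det_fromBlocks_zero₂₁, Matrix.det_one, one_mul]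

/-- The trivector on `g` that is Hodge dual to `stdG2star b` for the volume form `b.det`, viewed as
a three-form on `V = g*`. -/
noncomputable def starTrivector (b : Basis (Fin 7) F V) : V [⋀^Fin 3]→ₗ[F] F :=
  ∑ t, ((Equiv.Perm.sign (starPerm t) : ℤ) : F) •
    contractInl (b.reindex (finSumFinEquiv (m := 4) (n := 3)).symm).det
      fun i => b (starPerm t (Fin.castAdd 3 i))

theorem starTrivector_apply (b : Basis (Fin 7) F V) (θ : Fin 3 → V) :
    starTrivector b θ =
      ∑ t, (Matrix.of fun i j => b.repr (θ j) (starPerm t (Fin.natAdd 4 i))).det := by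
  rw [starTrivector, alternatingMap_sum_apply]
  exact Finset.sum_congr rfl fun t _ => sign_mul_contractInl_det_apply b (starPerm t) θ

/-- The contraction of `starTrivector b` with `a`, as a bilinear form. -/
noncomputable def starForm (b : Basis (Fin 7) F V) (a : V) : LinearMap.BilinForm F V :=
  twoSlots (starTrivector b) ![a, 0, 0] (i := 1) (j := 2) (by decide)

theorem starForm_apply (b : Basis (Fin 7) F V) (a x y : V) :
    starForm b a x y = starTrivector b ![a, x, y] := by
  have hvec : update (update ![a, 0, 0] 1 x) 2 y = ![a, x, y] := by
    ext i
    fin_cases i <;> rfl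
  rw [starForm, twoSlots_apply, hvec]

theorem isAlt_starForm (b : Basis (Fin 7) F V) (a : V) : (starForm b a).IsAlt :=
  fun _ => isAlt_twoSlots ..

theorem starForm_dualMap_add [FiniteDimensional F V] (hV : finrank F V = 7) {D : V →ₗ[F] V}
    {α : Dual F V} (hα : α ∘ₗ D = 0) {b : Basis (Fin 7) F (Dual F V)}
    (hD : ∀ v, (∀ i, α (v i) = 0) → formDeriv D (stdG2star b) v = 0) (φ ψ : Dual F V) :
    starForm b α (D.dualMap φ) ψ + starForm b α φ (D.dualMap ψ) =
      LinearMap.trace F V D * starForm b α φ ψ := by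
  have hderiv : formDeriv D.dualMap (starTrivector b) ![α, φ, ψ] =
      LinearMap.trace F V D * starTrivector b ![α, φ, ψ] :=
    formDeriv_sum_contractInl_eq_trace_mul (m := 4) (k := 3) hV _ D _ _ _ fun x hx => by
      rw [← stdG2star_eq_sum]
      exact hD x fun i => hx i 0
  have hα' : D.dualMap α = 0 := hα
  have hupdate₁ (χ : Dual F V) : update ![α, φ, ψ] 1 χ = ![α, χ, ψ] := by
    ext i : 1
    fin_cases i <;> rfl
  have hupdate₂ (χ : Dual F V) : update ![α, φ, ψ] 2 χ = ![α, φ, χ] := by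
    ext i : 1
    fin_cases i <;> rfl
  simpa [formDeriv_apply, Fin.sum_univ_three, hα', hupdate₁, hupdate₂, starForm_apply]
    using hderiv

theorem four_le_finrank_range {X : Type*} [AddCommGroup X] [Module F X] [FiniteDimensional F X]
    {β : LinearMap.BilinForm F X} (halt : β.IsAlt) {x y z w : X}
    (h : β x y * β z w - β x z * β y w + β x w * β y z ≠ 0) :
    4 ≤ finrank F (LinearMap.range β) := by
  have hneg (x y : X) : β y x = -β x y := (halt.neg_eq x y).symm
  have hli : LinearIndependent F ![β x, β y, β z, β w] := by
    refine Fintype.linearIndependent_iff.2 fun c hc => ?_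
    have heval (v : X) : c 0 * β x v + c 1 * β y v + c 2 * β z v + c 3 * β w v = 0 := by
      simpa [Fin.sum_univ_four] using congr($hc v)
    have hx := heval x
    have hy := heval y
    have hz := heval z
    have hw := heval w
    simp only [halt x, halt y, halt z, halt w, hneg x y, hneg x z, hneg x w,
      hneg y z, hneg y w, hneg z w] at hx hy hz hw
    intro i
    refine (mul_eq_zero_iff_right h).1 ?_
    fin_cases i <;> dsimp only [Fin.zero_eta, Fin.mk_one, Fin.reduceFinMk]
    · linear_combination β z w * hy - β y w * hz + β y z * hw
    · linear_combination -β z w * hx + β x w * hz - β x z * hw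
    · linear_combination β y w * hx - β x w * hy + β x y * hw
    · linear_combination -β y z * hx + β x z * hy - β x y * hz
  refine (finrank_span_eq_card hli).ge.trans (Submodule.finrank_mono (Submodule.span_le.2 ?_))
  rintro _ ⟨i, rfl⟩
  fin_cases i <;> exact ⟨_, rfl⟩

theorem four_le_finrank_range_starForm {V : Type*} [AddCommGroup V] [Module ℝ V]
    (b : Basis (Fin 7) ℝ V) {a : V} (ha : a ≠ 0) :
    4 ≤ finrank ℝ (LinearMap.range (starForm b a)) := by
  have : FiniteDimensional ℝ V := b.finiteDimensional_of_finite
  by_contra! hrank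
  have hpf (x y z w : V) : starForm b a x y * starForm b a z w -
      starForm b a x z * starForm b a y w + starForm b a x w * starForm b a y z = 0 := by
    by_contra h
    exact hrank.not_ge (four_le_finrank_range (isAlt_starForm b a) h)
  -- The Pfaffians of `starForm b a` on three coordinate four-spaces are quadratic forms in `a` with
  -- a positive definite linear combination.
  have hsq1 : b.repr a 6 ^ 2 + b.repr a 4 ^ 2 + b.repr a 5 ^ 2 = 0 := by
    simpa [starForm_apply, starTrivector_apply, Fin.sum_univ_succ, starPerm_apply,
      Matrix.det_fin_three, Finsupp.single_apply, sq] using hpf (b 0) (b 1) (b 2) (b 3)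
  have hsq2 : -b.repr a 6 ^ 2 + b.repr a 2 ^ 2 + b.repr a 3 ^ 2 = 0 := by
    simpa [starForm_apply, starTrivector_apply, Fin.sum_univ_succ, starPerm_apply,
      Matrix.det_fin_three, Finsupp.single_apply, sq] using hpf (b 0) (b 1) (b 4) (b 5)
  have hsq3 : -b.repr a 6 ^ 2 + b.repr a 0 ^ 2 + b.repr a 1 ^ 2 = 0 := by
    simpa [starForm_apply, starTrivector_apply, Fin.sum_univ_succ, starPerm_apply,
      Matrix.det_fin_three, Finsupp.single_apply, sq] using hpf (b 2) (b 3) (b 4) (b 5)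
  have hnonneg (i : Fin 7) : 0 ≤ b.repr a i ^ 2 := sq_nonneg _
  refine ha (b.ext_elem fun i => ?_)
  rw [map_zero, Finsupp.zero_apply, ← sq_eq_zero_iff]
  fin_cases i <;> dsimp only [Fin.zero_eta, Fin.mk_one, Fin.reduceFinMk] <;>
    linarith [hnonneg 0, hnonneg 1, hnonneg 2, hnonneg 3, hnonneg 4, hnonneg 5, hnonneg 6]

end GTwoStar

section DualForm

variable {F V : Type*} [Field F] [AddCommGroup V] [Module F V] [FiniteDimensional F V]

theorem exists_isConfSymplecticOn_of_dualMap {D : End F V} {u : Submodule F V}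
    (hu : ∀ x ∈ u, D x ∈ u) {α : Dual F V} (hker : LinearMap.ker α = u)
    {β : LinearMap.BilinForm F (Dual F V)} (halt : β.IsAlt) (hα : β α = 0) {c : F}
    (hβ : ∀ φ ψ, β (D.dualMap φ) ψ + β φ (D.dualMap ψ) = c * β φ ψ) :
    ∃ W : Submodule F u, finrank F W = finrank F (LinearMap.range β) ∧
      IsConfSymplecticOn (D.restrict hu) c W := by
  let P : Dual F V →ₗ[F] u := ((evalEquiv F V).symm.toLinearMap ∘ₗ β).codRestrict u fun φ => by
    rw [← hker, LinearMap.mem_ker, LinearMap.comp_apply, LinearEquiv.coe_coe,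
      apply_evalEquiv_symm_apply, ← halt.neg_eq, hα, LinearMap.zero_apply, neg_zero]
  have hP (φ ψ : Dual F V) : ψ (P φ) = β φ ψ := apply_evalEquiv_symm_apply F V ψ (β φ)
  have hkerP : LinearMap.ker P = LinearMap.ker β := by
    rw [LinearMap.ker_codRestrict, LinearEquiv.ker_comp]
  refine ⟨LinearMap.range P, ?_, isConfSymplecticOn_range
    (A' := c • LinearMap.id - D.dualMap) (LinearMap.ext fun φ => Subtype.ext ?_) halt hkerP ?_⟩
  · have hrank := P.finrank_range_add_finrank_ker.trans β.finrank_range_add_finrank_ker.symm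
    rwa [hkerP, Nat.add_right_cancel_iff] at hrank
  · refine (evalEquiv F V).injective (LinearMap.ext fun ψ => ?_)
    calc ψ (D (P φ)) = β φ (D.dualMap ψ) := hP φ (D.dualMap ψ)
      _ = c * β φ ψ - β (D.dualMap φ) ψ := eq_sub_of_add_eq' (hβ φ ψ)
      _ = ψ (P (c • φ - D.dualMap φ)) := by
        rw [hP, map_sub, map_smul, LinearMap.sub_apply, LinearMap.smul_apply, smul_eq_mul]
  · intro φ ψ
    simp only [LinearMap.sub_apply, LinearMap.smul_apply, LinearMap.id_apply, map_sub, map_smul,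
      smul_eq_mul]
    linear_combination -hβ φ ψ

end DualForm

section SymplecticContraction

variable {F U : Type*} [Field F] [AddCommGroup U] [Module F U]

theorem formDeriv_sum_contractInl_symplectic [NeZero (2 : F)] {ι κ : Type*} [Fintype ι]
    [DecidableEq ι] [Fintype κ] [DecidableEq κ] (B : Basis (Fin 2 ⊕ κ) F U)
    (vol : U [⋀^Fin 2 ⊕ κ]→ₗ[F] F) {A : End F U} {c : F} {W : Submodule F U}
    {hW : ∀ x ∈ W, A x ∈ W} {τ : LinearMap.BilinForm F W} {b : Basis (ι ⊕ ι) F W}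
    (hb : ∀ s t, τ (b s) (b t) = Matrix.J ι F s t)
    (hN : ∀ x y, τ (A.restrict hW x) y + τ x (A.restrict hW y) = c * τ x y) :
    formDeriv A (∑ i, contractInl vol ![(b (.inl i) : U), b (.inr i)]) =
      (LinearMap.trace F U A - c) • ∑ i, contractInl vol ![(b (.inl i) : U), b (.inr i)] := by
  ext θ
  have hslots : (Sum.inl 0 : Fin 2 ⊕ κ) ≠ Sum.inl 1 := Sum.inl_injective.ne zero_ne_one
  let γ : LinearMap.BilinForm F W :=
    (twoSlots vol (Sum.elim 0 θ) hslots).compl₁₂ W.subtype W.subtype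
  have hγ (x y : W) : γ x y = contractInl vol ![(x : U), y] θ := by
    refine congrArg vol (funext fun s => ?_)
    match s with
    | .inl 0 => rfl
    | .inl 1 => rfl
    | .inr s => rfl
  have hγalt : γ.IsAlt := fun x => isAlt_twoSlots vol (Sum.elim 0 θ) hslots (x : U)
  have hupdate₁ (x y z : U) : update ![x, y] 0 z = ![z, y] := by
    ext i : 1
    fin_cases i <;> rfl
  have hupdate₂ (x y z : U) : update ![x, y] 1 z = ![x, z] := by
    ext i : 1
    fin_cases i <;> rfl
  have hterm (i : ι) : γ (A.restrict hW (b (.inl i))) (b (.inr i)) +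
      γ (b (.inl i)) (A.restrict hW (b (.inr i))) +
      formDeriv A (contractInl vol ![(b (.inl i) : U), b (.inr i)]) θ =
        LinearMap.trace F U A * γ (b (.inl i)) (b (.inr i)) := by
    simpa only [hγ, Fin.sum_univ_two, hupdate₁, hupdate₂, Matrix.cons_val_zero, Matrix.cons_val_one,
      LinearMap.coe_restrict_apply] using
      sum_contractInl_update_add_formDeriv B A vol ![(b (.inl i) : U), b (.inr i)] θ
  have hsum := Finset.sum_congr (rfl : (Finset.univ : Finset ι) = _) fun i _ => hterm i
  rw [Finset.sum_add_distrib, sum_apply_add_apply_eq_mul_sum hb hN hγalt, ← Finset.mul_sum] at hsum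
  simp only [map_sum, alternatingMap_sum_apply, AlternatingMap.smul_apply, smul_eq_mul, ← hγ,
    sub_mul]
  exact eq_sub_of_add_eq' hsum

theorem sign_smul_contractInl_det {m k : ℕ} (b : Basis (Fin (m + k)) F U)
    (σ : Equiv.Perm (Fin (m + k))) :
    ((Equiv.Perm.sign σ : ℤ) : F) • contractInl (b.reindex finSumFinEquiv.symm).det
        (fun i => b (σ (Fin.castAdd k i))) =
      wedgeCov k fun i => b.coord (σ (Fin.natAdd m i)) := by
  ext θ
  rw [AlternatingMap.smul_apply, smul_eq_mul, sign_mul_contractInl_det_apply,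
    ← Matrix.det_transpose]
  rfl

theorem exists_basis_formDeriv_wedgeCov_add_wedgeCov_eq_zero [NeZero (2 : F)]
    (hU : finrank F U = 6) {A : End F U} {W : Submodule F U} (hW : finrank F W = 4)
    (h : IsConfSymplecticOn A (LinearMap.trace F U A) W) :
    ∃ w : Basis (Fin 6) F U, formDeriv A
      (wedgeCov 4 ![w.coord 0, w.coord 1, w.coord 4, w.coord 5] +
        wedgeCov 4 ![w.coord 2, w.coord 3, w.coord 4, w.coord 5]) = 0 := by
  have : FiniteDimensional F U := FiniteDimensional.of_finrank_pos (by lia)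
  obtain ⟨hinv, τ, halt, hτ, hN⟩ := h
  obtain ⟨n, b, hb⟩ := exists_symplectic_basis halt hτ
  obtain rfl : n = 2 := by
    have := hW.symm.trans (finrank_eq_card_basis b)
    simp only [Fintype.card_sum, Fintype.card_fin] at this
    lia
  let e : Fin 2 ⊕ Fin 2 ≃ Fin 4 := finSumFinEquiv.trans (Equiv.swap 1 2)
  obtain ⟨B, hB⟩ := exists_basis_sum_inl_eq (k := 2) hU (b.reindex e)
  let w : Basis (Fin (2 + 4)) F U := B.reindex (finSumFinEquiv (m := 4) (n := 2))
  have hw (i : Fin 4) : w (Fin.castAdd 2 i) = b (e.symm i) := by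
    rw [Basis.reindex_apply, finSumFinEquiv_symm_apply_castAdd, hB, Basis.reindex_apply]
  have hw0 : w 0 = b (.inl 0) := hw 0
  have hw1 : w 1 = b (.inr 0) := hw 1
  have hw2 : w 2 = b (.inl 1) := hw 2
  have hw3 : w 3 = b (.inr 1) := hw 3
  have hclosed := formDeriv_sum_contractInl_symplectic (w.reindex finSumFinEquiv.symm)
    (w.reindex finSumFinEquiv.symm).det hb hN
  rw [sub_self, zero_smul, Fin.sum_univ_two, ← hw0, ← hw1, ← hw2, ← hw3] at hclosed
  have hvol₁ : contractInl (w.reindex finSumFinEquiv.symm).det ![w 0, w 1] =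
      wedgeCov 4 ![w.coord 2, w.coord 3, w.coord 4, w.coord 5] := by
    have h := sign_smul_contractInl_det w 1
    rw [Equiv.Perm.sign_one, Units.val_one, Int.cast_one, one_smul] at h
    convert h using 2 <;> ext i : 1 <;> fin_cases i <;> rfl
  have hvol₂ : contractInl (w.reindex finSumFinEquiv.symm).det ![w 2, w 3] =
      wedgeCov 4 ![w.coord 0, w.coord 1, w.coord 4, w.coord 5] := by
    have h := sign_smul_contractInl_det w (c[0, 2] * c[1, 3])
    rw [show Equiv.Perm.sign (c[0, 2] * c[1, 3] : Equiv.Perm (Fin (2 + 4))) = 1 by decide,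
      Units.val_one, Int.cast_one, one_smul] at h
    convert h using 2 <;> ext i : 1 <;> fin_cases i <;> rfl
  exact ⟨w, by rw [add_comm, ← hvol₁, ← hvol₂, hclosed]⟩

end SymplecticContraction

section AdaptedBasis

theorem det_fin_four {R : Type*} [CommRing R] (A : Matrix (Fin 4) (Fin 4) R) :
    A.det =
      (A 0 0 * A 1 1 - A 0 1 * A 1 0) * (A 2 2 * A 3 3 - A 2 3 * A 3 2) -
        (A 0 0 * A 1 2 - A 0 2 * A 1 0) * (A 2 1 * A 3 3 - A 2 3 * A 3 1) +
        (A 0 0 * A 1 3 - A 0 3 * A 1 0) * (A 2 1 * A 3 2 - A 2 2 * A 3 1) +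
        (A 0 1 * A 1 2 - A 0 2 * A 1 1) * (A 2 0 * A 3 3 - A 2 3 * A 3 0) -
        (A 0 1 * A 1 3 - A 0 3 * A 1 1) * (A 2 0 * A 3 2 - A 2 2 * A 3 0) +
        (A 0 2 * A 1 3 - A 0 3 * A 1 2) * (A 2 0 * A 3 1 - A 2 1 * A 3 0) := by
  rw [Matrix.det_succ_row_zero]
  simp only [Nat.succ_eq_add_one, Nat.reduceAdd, Matrix.det_fin_three, Matrix.submatrix_apply,
    Fin.succ_zero_eq_one, Fin.succAbove, Fin.castSucc_zero, Fin.succ_one_eq_two, Fin.castSucc_one,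
    Fin.reduceSucc, Fin.reduceCastSucc, Fin.sum_univ_four, Fin.coe_ofNat_eq_mod, Nat.zero_mod,
    pow_zero, one_mul, lt_self_iff_false, ↓reduceIte, not_lt_zero, Nat.one_mod, pow_one, neg_mul,
    zero_lt_one, Fin.lt_one_iff, Fin.reduceEq, Nat.reduceMod, even_two, Even.neg_pow, one_pow,
    Fin.reduceLT, Nat.mod_succ]
  ring

variable {F V : Type*} [Field F] [AddCommGroup V] [Module F V]

theorem wedgeCov_compLinearMap {U : Type*} [AddCommGroup U] [Module F U] {m : ℕ}
    (φ : Fin m → Dual F V) (f : U →ₗ[F] V) :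
    (wedgeCov m φ).compLinearMap f = wedgeCov m fun i => φ i ∘ₗ f := rfl

/-- The left-hand side is `stdG2star` of the covectors in `linearIndependent_star`, restricted to
the hyperplane where `α` vanishes. -/
theorem wedgeCov_star_eq_wedgeCov_add_wedgeCov (w₀ w₁ w₂ w₃ y₀ y₁ : Dual F V) :
    wedgeCov 4 ![w₀, y₁ + w₂, w₁, y₀ - w₃] - wedgeCov 4 ![w₀, y₁ + w₂, w₀, w₂] -
          wedgeCov 4 ![w₁, y₀ - w₃, w₀, w₂] - wedgeCov 4 ![y₁ + w₂, y₀ - w₃, w₂, w₃] +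
        wedgeCov 4 ![y₁ + w₂, w₁, w₀, w₃] + wedgeCov 4 ![w₀, y₀ - w₃, w₀, w₃] +
      wedgeCov 4 ![w₀, w₁, w₂, w₃] =
    wedgeCov 4 ![w₀, w₁, y₀, y₁] + wedgeCov 4 ![w₂, w₃, y₀, y₁] := by
  ext v
  simp only [AlternatingMap.add_apply, AlternatingMap.sub_apply, wedgeCov_apply, det_fin_four,
    Matrix.of_apply, Matrix.cons_val, LinearMap.add_apply, LinearMap.sub_apply]
  ring

theorem linearIndependent_star {α y₀ y₁ y₂ y₃ y₄ y₅ : Dual F V}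
    (h : LinearIndependent F ![α, y₀, y₁, y₂, y₃, y₄, y₅]) :
    LinearIndependent F ![α + y₀, y₅ + y₂, y₁, y₄ - y₃, y₀, y₂, y₃] := by
  rw [Fintype.linearIndependent_iff] at h ⊢
  intro c hc
  have hc' := h ![c 0, c 0 + c 4, c 2, c 1 + c 5, c 6 - c 3, c 3, c 1] (by
    rw [← hc]
    simp only [Fin.sum_univ_seven, Matrix.cons_val]
    module)
  have h0 : c 0 = 0 := hc' 0
  have h1 : c 1 = 0 := hc' 6
  have h2 : c 2 = 0 := hc' 2
  have h3 : c 3 = 0 := hc' 5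
  have h4 : c 0 + c 4 = 0 := hc' 1
  have h5 : c 1 + c 5 = 0 := hc' 3
  have h6 : c 6 - c 3 = 0 := hc' 4
  intro i
  fin_cases i <;> dsimp only [Fin.zero_eta, Fin.mk_one, Fin.reduceFinMk]
  · exact h0
  · exact h1
  · exact h2
  · exact h3
  · linear_combination h4 - h0
  · linear_combination h5 - h1
  · linear_combination h6 + h3

theorem exists_basis_dual_comp_subtype_eq {n : ℕ} {u : Submodule F V} (w : Basis (Fin n) F u)
    {α : Dual F V} {e : V} (he : α e = 1) (hker : LinearMap.ker α = u) :
    ∃ b : Basis (Fin (n + 1)) F (Dual F V), b 0 = α ∧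
      ∀ i : Fin n, b i.succ ∘ₗ u.subtype = w.coord i := by
  have hα (x : u) : α x = 0 := LinearMap.mem_ker.1 (hker.ge x.2)
  let B : Basis (Fin (n + 1)) F V := Basis.mkFinCons e w
    (fun c x hx h => by simpa [he, hα ⟨x, hx⟩] using congr(α $h))
    (fun z => ⟨-α z, by rw [← hker, LinearMap.mem_ker]; simp [he]⟩)
  have hB0 : B 0 = e := by simp [B]
  have hBsucc (i : Fin n) : B i.succ = w i := by simp [B]
  refine ⟨B.dualBasis, B.ext fun j => ?_, fun i => w.ext fun j => ?_⟩
  · refine Fin.cases ?_ (fun j => ?_) j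
    · rw [hB0, he, ← hB0]
      simp
    · rw [hBsucc, hα, ← hBsucc]
      simp
  · rw [LinearMap.comp_apply, Submodule.subtype_apply, ← hBsucc]
    simp [Finsupp.single_apply]

theorem exists_basis_stdG2star_compLinearMap_subtype_eq {u : Submodule F V}
    (w : Basis (Fin 6) F u) {α : Dual F V} {e : V} (he : α e = 1) (hker : LinearMap.ker α = u) :
    ∃ b : Basis (Fin 7) F (Dual F V), (stdG2star b).compLinearMap u.subtype =
      wedgeCov 4 ![w.coord 0, w.coord 1, w.coord 4, w.coord 5] +
        wedgeCov 4 ![w.coord 2, w.coord 3, w.coord 4, w.coord 5] := by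
  obtain ⟨d, hd₀, hd⟩ := exists_basis_dual_comp_subtype_eq w he hker
  have hli : LinearIndependent F ![d 0, d 1, d 2, d 3, d 4, d 5, d 6] := by
    convert d.linearIndependent using 1
    ext i : 1
    fin_cases i <;> rfl
  have hd0 : d 0 ∘ₗ u.subtype = 0 :=
    LinearMap.ext fun x => LinearMap.mem_ker.1 (hd₀ ▸ hker.ge x.2)
  have hdw (i : Fin 7) : d i ∘ₗ u.subtype =
      ![0, w.coord 0, w.coord 1, w.coord 2, w.coord 3, w.coord 4, w.coord 5] i := by
    fin_cases i
    exacts [hd0, hd 0, hd 1, hd 2, hd 3, hd 4, hd 5]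
  let b := basisOfLinearIndependentOfCardEqFinrank (linearIndependent_star hli)
    (finrank_eq_card_basis d).symm
  let r : Fin 7 → Dual F u := ![w.coord 0, w.coord 5 + w.coord 2, w.coord 1,
    w.coord 4 - w.coord 3, w.coord 0, w.coord 2, w.coord 3]
  have hr (i : Fin 7) : b i ∘ₗ u.subtype = r i := by
    rw [coe_basisOfLinearIndependentOfCardEqFinrank]
    fin_cases i <;>
      simp only [r, Fin.zero_eta, Fin.mk_one, Fin.reduceFinMk, Matrix.cons_val, LinearMap.add_comp,
        LinearMap.sub_comp, hdw, zero_add]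
  have hbw (i j k l : Fin 7) : (bw b i j k l).compLinearMap u.subtype =
      wedgeCov 4 ![r i, r j, r k, r l] := by
    rw [bw, wedgeCov_compLinearMap, ← hr, ← hr, ← hr, ← hr]
    refine congrArg (wedgeCov 4) (funext fun s => ?_)
    fin_cases s <;> rfl
  refine ⟨b, ?_⟩
  calc (stdG2star b).compLinearMap u.subtype =
      (bw b 0 1 2 3).compLinearMap u.subtype - (bw b 0 1 4 5).compLinearMap u.subtype -
        (bw b 2 3 4 5).compLinearMap u.subtype - (bw b 1 3 5 6).compLinearMap u.subtype +
        (bw b 1 2 4 6).compLinearMap u.subtype + (bw b 0 3 4 6).compLinearMap u.subtype +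
        (bw b 0 2 5 6).compLinearMap u.subtype := rfl
    _ = _ := by
      simp only [hbw]
      exact wedgeCov_star_eq_wedgeCov_add_wedgeCov ..

end AdaptedBasis

section Cocalibrated

theorem formDeriv_compLinearMap {R M M' N ι : Type*} [CommRing R] [AddCommGroup M] [Module R M]
    [AddCommGroup M'] [Module R M'] [AddCommGroup N] [Module R N] [DecidableEq ι] [Fintype ι]
    {f : M →ₗ[R] M} {f' : M' →ₗ[R] M'} {i : M' →ₗ[R] M} (h : f ∘ₗ i = i ∘ₗ f')
    (Ω : M [⋀^ι]→ₗ[R] N) :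
    (formDeriv f Ω).compLinearMap i = formDeriv f' (Ω.compLinearMap i) := by
  ext v
  rw [AlternatingMap.compLinearMap_apply, formDeriv_apply, formDeriv_apply]
  refine Finset.sum_congr rfl fun j _ => congrArg Ω ?_
  rw [← LinearMap.comp_apply, h, LinearMap.comp_apply, ← Function.comp_def, ← Function.comp_update]
  rfl

theorem ceDiff_eq_zero_iff_formDeriv_restrict_eq_zero {F g : Type*} [Field F] [LieRing g]
    [LieAlgebra F g] {k : ℕ} {α : Dual F g} {e : g} (he : α e = 1) {D : End F g}
    (hbr : ∀ x y : g, ⁅x, y⁆ = α x • D y - α y • D x) {u : Submodule F g}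
    (hker : LinearMap.ker α = u) (hu : ∀ x ∈ u, D x ∈ u) (Ψ : g [⋀^Fin (k + 1)]→ₗ[F] F) :
    ceDiff k Ψ = 0 ↔ formDeriv (D.restrict hu) (Ψ.compLinearMap u.subtype) = 0 := by
  have hrestrict : D ∘ₗ u.subtype = u.subtype ∘ₗ D.restrict hu := rfl
  have hmem (x : g) : α x = 0 ↔ x ∈ u := by rw [← hker, LinearMap.mem_ker]
  rw [ceDiff_eq_zero_iff α he D hbr, ← formDeriv_compLinearMap hrestrict]
  simp only [hmem]
  constructor
  · intro h
    ext v
    exact h _ fun i => (v i).2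
  · intro h v hv
    exact congr($h fun i => ⟨v i, hv i⟩)

/-- `Ψ` is kept apart from `stdG2star b` because checking `ceDiff 3 (stdG2star b)` against the index
type `Fin (3 + 1)` would unfold `stdG2star`. -/
theorem exists_isConfSymplecticOn_of_ceDiff_stdG2star {F g : Type*} [Field F] [LieRing g]
    [LieAlgebra F g] (hg : finrank F g = 7) {α : Dual F g} {e : g} (he : α e = 1) {D : End F g}
    (hbr : ∀ x y : g, ⁅x, y⁆ = α x • D y - α y • D x) (hαD : α ∘ₗ D = 0) {u : Submodule F g}
    (hker : LinearMap.ker α = u) (hu : ∀ x ∈ u, D x ∈ u) {Ψ : g [⋀^Fin 4]→ₗ[F] F}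
    (hΨ : ceDiff 3 Ψ = 0) {b : Basis (Fin 7) F (Dual F g)} (hb : Ψ = stdG2star b) :
    ∃ W : Submodule F u, finrank F W = finrank F (LinearMap.range (starForm b α)) ∧
      IsConfSymplecticOn (D.restrict hu) (LinearMap.trace F u (D.restrict hu)) W := by
  have : FiniteDimensional F g := FiniteDimensional.of_finrank_pos (by lia)
  have hderiv : ∀ v : Fin 4 → g, (∀ i, α (v i) = 0) → formDeriv D Ψ v = 0 :=
    (ceDiff_eq_zero_iff α he D hbr Ψ).1 hΨ
  subst hb
  have hDu (x : g) : D x ∈ u := by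
    rw [← hker, LinearMap.mem_ker]
    exact congr($hαD x)
  have hαα : starForm b α α = 0 := LinearMap.ext fun φ => by
    rw [starForm_apply]
    exact (starTrivector b).map_eq_zero_of_eq (i := 0) (j := 1) _ rfl zero_ne_one
  have hβ := starForm_dualMap_add hg hαD hderiv
  rw [← LinearMap.trace_restrict_eq_of_forall_mem u D hDu hu] at hβ
  exact exists_isConfSymplecticOn_of_dualMap hu hker (isAlt_starForm b α) hαα hβ

theorem exists_ceDiff_stdG2star_eq_zero {F g : Type*} [Field F] [NeZero (2 : F)] [LieRing g]
    [LieAlgebra F g] {α : Dual F g} {e : g} (he : α e = 1) {D : End F g}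
    (hbr : ∀ x y : g, ⁅x, y⁆ = α x • D y - α y • D x) {u : Submodule F g}
    (hker : LinearMap.ker α = u) (hu : ∀ x ∈ u, D x ∈ u) (hu6 : finrank F u = 6)
    {W : Submodule F u} (hW : finrank F W = 4)
    (h : IsConfSymplecticOn (D.restrict hu) (LinearMap.trace F u (D.restrict hu)) W) :
    ∃ b : Basis (Fin 7) F (Dual F g), ceDiff 3 (stdG2star b) = 0 := by
  obtain ⟨w, hw⟩ := exists_basis_formDeriv_wedgeCov_add_wedgeCov_eq_zero hu6 hW h
  obtain ⟨b, hb⟩ := exists_basis_stdG2star_compLinearMap_subtype_eq w he hker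
  exact ⟨b, (ceDiff_eq_zero_iff_formDeriv_restrict_eq_zero he hbr hker hu _).2
    ((congrArg (formDeriv (D.restrict hu)) hb).trans hw)⟩

end Cocalibrated

/-- Let `g` be a seven-dimensional real Lie algebra with a
six-dimensional abelian ideal `u`, `e₇ ∈ g ∖ u`, `u = V₂ ⊕ V₄` with `dim V₂ = 2`,
`dim V₄ = 4`, and let `ω ∈ Λ²V₄*` be nondegenerate.  Then `g` admits a cocalibrated
`G₂*`-structure (a closed four-form of the standard type `stdG2star`) iff `ad(e₇)|_u` is
similar under `GL(u)` to an element of the set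
`S = {f : f(V₄) ⊆ V₄, pr_{V₄} ∘ f|_{V₄} = -(tr f₂ / 2)·id + f₄, f₄ ∈ sp(V₄,ω)}`,
where `f₂ := pr_{V₂} ∘ f|_{V₂}`. -/
theorem stmt17 {g : Type*} [LieRing g] [LieAlgebra ℝ g] [FiniteDimensional ℝ g]
    (hg : finrank ℝ g = 7)
    (u : LieIdeal ℝ g) (habel : ∀ x ∈ u, ∀ y ∈ u, ⁅x, y⁆ = (0 : g))
    (hu : finrank ℝ ↥u = 6) (e₇ : g) (he : e₇ ∉ u)
    (V₂ V₄ : Submodule ℝ ↥u) (hc : IsCompl V₂ V₄)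
    (h2 : finrank ℝ ↥V₂ = 2) (h4 : finrank ℝ ↥V₄ = 4)
    (ω : ↥V₄ →ₗ[ℝ] ↥V₄ →ₗ[ℝ] ℝ) (halt : ∀ v : ↥V₄, ω v v = 0)
    (hnd : ∀ v : ↥V₄, (∀ w : ↥V₄, ω v w = 0) → v = 0)
    (adE : ↥u →ₗ[ℝ] ↥u) (hadE : ∀ x : ↥u, (adE x : g) = ⁅e₇, (x : g)⁆) :
    (∃ Ψ : g [⋀^Fin 4]→ₗ[ℝ] ℝ, ceDiff 3 ⇑Ψ = 0 ∧
        ∃ b : Basis (Fin 7) ℝ (Module.Dual ℝ g), Ψ = stdG2star b) ↔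
      ∃ T : ↥u ≃ₗ[ℝ] ↥u, ∃ f : ↥u →ₗ[ℝ] ↥u,
        f = T.toLinearMap ∘ₗ adE ∘ₗ T.symm.toLinearMap ∧
        (∀ x : ↥u, x ∈ V₄ → f x ∈ V₄) ∧
        ∃ f₄ : ↥V₄ →ₗ[ℝ] ↥V₄,
          (∀ x y : ↥V₄, ω (f₄ x) y + ω x (f₄ y) = 0) ∧
          ∀ x : ↥V₄,
            (V₄.linearProjOfIsCompl V₂ hc.symm) (f ↑x) =
              -((LinearMap.trace ℝ ↥V₂)
                  ((V₂.linearProjOfIsCompl V₄ hc) ∘ₗ f ∘ₗ V₂.subtype) / 2) • x +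
                f₄ x := by
  have hω : LinearMap.BilinForm.Nondegenerate ω :=
    (LinearMap.IsAlt.isRefl halt).nondegenerate_iff_separatingLeft.2 hnd
  obtain ⟨α, hα, hker⟩ := exists_dual_apply_eq_one_and_ker_eq u (hg.trans (by rw [hu])) he
  have hbr := lie_eq_of_ker_eq u habel hα hker
  have hu' : ∀ x ∈ u.toSubmodule, LieAlgebra.ad ℝ g e₇ x ∈ u.toSubmodule :=
    fun x hx => u.lie_mem hx
  obtain rfl : adE = (LieAlgebra.ad ℝ g e₇).restrict hu' :=
    LinearMap.ext fun x => Subtype.ext (hadE x)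
  refine Iff.trans ⟨?_, ?_⟩ (exists_similar_skew_projectionOnto_iff hc h4 halt hω _).symm
  · rintro ⟨Ψ, hΨ, b, hb⟩
    obtain ⟨W, hW, hconf⟩ := exists_isConfSymplecticOn_of_ceDiff_stdG2star hg hα hbr
      (comp_ad_eq_zero_of_ker_eq u hα hker) hker hu' hΨ hb
    exact exists_isConfSymplecticOn_trace_of_four_le_finrank hu
      (hW ▸ four_le_finrank_range_starForm b fun h => by simp [h] at hα) hconf
  · rintro ⟨W, hW, hconf⟩
    obtain ⟨b, hb⟩ := exists_ceDiff_stdG2star_eq_zero hα hbr hker hu' hu hW hconf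
    exact ⟨stdG2star b, hb, b, rfl⟩
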